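/- The set {ρ_a : 0 ≤ a < p^2} is an 𝔒_0-basis of 𝔒_2, the element ρ generates a normal basis for K_2/K_0, and {Ψ^{(a)} : 0 ≤ a < p^2} is a K_0-basis of the group algebra K_0[G]. -/

import Mathlib

/-- A normalized discrete valuation on a field `K`, recorded as a function
`v : K → ℤ`.  The value of `v` at `0` is irrelevant: all conditions below only
refer to nonzero elements (the convention `v 0 = ∞` being understood). -/
structure IsDiscVal {K : Type*} [Field K] (v : K → ℤ) : Prop where
  map_one : v 1 = 0
  map_mul : ∀ x y : K, x ≠ 0 → y ≠ 0 → v (x * y) = v x + v y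
  min_le_add : ∀ x y : K, x ≠ 0 → y ≠ 0 → x + y ≠ 0 → min (v x) (v y) ≤ v (x + y)
  exists_uniformizer : ∃ π : K, π ≠ 0 ∧ v π = 1

/-!
Put `X = x₂ - μ x₁`. The elements `x₁` and `X` have valuations `-p b₁` and `-b₂`, and since
`p ∤ b₁` and `b₂ ≡ b₁ mod p²`, the valuations of the `p²` products `x₁ ^ i (X)_j` with `i, j < p`,
where `(X)_j` is the falling factorial, are pairwise distinct modulo `p²`. A family of `p²`
elements with this property behaves like an orthogonal basis: the valuation of a linear combination
is the minimum of the valuations of its terms.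

Up to terms of higher valuation, `σ ^ p` fixes `x₁` and translates `X` by `1`, so that
`Ψ₂ = σ ^ p - 1` acts as the difference operator `(X)_j ↦ j (X)_(j-1)`. The automorphism `σ`
translates `x₁` by `1` and `X` by `-μ`; by the Vandermonde identity the truncated binomial series
`(1 + Ψ₂) ^ μ` translates `X` by `μ`, so `Ψ₁ = σ (1 + Ψ₂) ^ μ - 1` acts as a derivative in `x₁`
alone. Modulo higher terms `ρ` is a multiple of the top product, so `Ψ₂ ^ j Ψ₁ ^ i` raises its
valuation by exactly `i p b₁ + j b₂`. After scaling by powers of `π₀`, the elements `Ψ^{(a)} ρ` have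
pairwise distinct valuations in `[0, p²)`, which gives all three assertions.
-/

/-- `HasVal v x n` says that the valuation of `x` is `n`; it includes `x ≠ 0`, since `v 0` is a junk
value. -/
def HasVal {K : Type*} [Field K] (v : K → ℤ) (x : K) (n : ℤ) : Prop := x ≠ 0 ∧ v x = n

section Valuation

variable {K : Type*} [Field K] {v : K → ℤ} {m n : ℤ} {x y : K}

namespace IsDiscVal

lemma map_inv (hv : IsDiscVal v) (hx : x ≠ 0) : v x⁻¹ = -v x := by
  have := hv.map_mul x x⁻¹ hx (inv_ne_zero hx)
  rw [mul_inv_cancel₀ hx, hv.map_one] at this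
  omega

lemma map_pow (hv : IsDiscVal v) (hx : x ≠ 0) (k : ℕ) : v (x ^ k) = k * v x := by
  induction k with
  | zero => simpa using hv.map_one
  | succ k ih =>
    rw [pow_succ, hv.map_mul _ _ (pow_ne_zero k hx) hx, ih]
    push_cast
    ring

lemma map_zpow (hv : IsDiscVal v) (hx : x ≠ 0) (k : ℤ) : v (x ^ k) = k * v x := by
  obtain ⟨k, rfl | rfl⟩ := k.eq_nat_or_neg
  · rw [zpow_natCast, hv.map_pow hx]
  · rw [zpow_neg, zpow_natCast, hv.map_inv (pow_ne_zero k hx), hv.map_pow hx]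
    ring

lemma map_neg (hv : IsDiscVal v) (hx : x ≠ 0) : v (-x) = v x := by
  have hone : (-1 : K) ≠ 0 := neg_ne_zero.2 one_ne_zero
  have hsq := hv.map_mul (-1) (-1) hone hone
  rw [neg_mul_neg, one_mul, hv.map_one] at hsq
  rw [neg_eq_neg_one_mul, hv.map_mul _ _ hone hx]
  omega

/-- The fractional ideal `𝔓ⁿ` of elements of valuation at least `n`. -/
def fracIdeal (hv : IsDiscVal v) (n : ℤ) : AddSubgroup K where
  carrier := {z | z = 0 ∨ n ≤ v z}
  zero_mem' := Or.inl rfl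
  add_mem' {x y} hx hy := by
    by_cases hx0 : x = 0
    · simpa [hx0] using hy
    by_cases hy0 : y = 0
    · simpa [hy0] using hx
    refine or_iff_not_imp_left.2 fun hxy => ?_
    exact (le_min (hx.resolve_left hx0) (hy.resolve_left hy0)).trans
      (hv.min_le_add x y hx0 hy0 hxy)
  neg_mem' {x} hx := by
    by_cases hx0 : x = 0
    · simp [hx0]
    · exact Or.inr ((hx.resolve_left hx0).trans_eq (hv.map_neg hx0).symm)

section FracIdeal

variable (hv : IsDiscVal v)

lemma mem_fracIdeal_self (x : K) : x ∈ hv.fracIdeal (v x) := Or.inr le_rfl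

lemma le_of_mem_fracIdeal (hx : x ∈ hv.fracIdeal n) (hx0 : x ≠ 0) : n ≤ v x :=
  hx.resolve_left hx0

lemma fracIdeal_antitone : Antitone hv.fracIdeal := fun _ _ h _ hx => hx.imp_right h.trans

protected lemma mul_mem (hx : x ∈ hv.fracIdeal m) (hy : y ∈ hv.fracIdeal n) :
    x * y ∈ hv.fracIdeal (m + n) := by
  refine or_iff_not_imp_left.2 fun hxy => ?_
  obtain ⟨hx0, hy0⟩ := mul_ne_zero_iff.1 hxy
  rw [hv.map_mul x y hx0 hy0]
  exact add_le_add (hx.resolve_left hx0) (hy.resolve_left hy0)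

protected lemma one_mem : (1 : K) ∈ hv.fracIdeal 0 := Or.inr hv.map_one.ge

protected lemma pow_mem (hx : x ∈ hv.fracIdeal n) (k : ℕ) : x ^ k ∈ hv.fracIdeal (k * n) := by
  induction k with
  | zero => simpa using hv.one_mem
  | succ k ih =>
    rw [pow_succ, Nat.cast_succ, add_one_mul]
    exact hv.mul_mem ih hx

lemma natCast_mul_mem (k : ℕ) (hx : x ∈ hv.fracIdeal n) : k * x ∈ hv.fracIdeal n := by
  rw [← nsmul_eq_mul]
  exact nsmul_mem hx k

protected lemma natCast_mem (k : ℕ) : (k : K) ∈ hv.fracIdeal 0 := by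
  simpa using hv.natCast_mul_mem k hv.one_mem

lemma mul_intCast_mem (hx : x ∈ hv.fracIdeal n) (k : ℤ) : x * k ∈ hv.fracIdeal n := by
  rw [← zsmul_eq_mul']
  exact zsmul_mem hx k

protected lemma div_mem (hx : x ∈ hv.fracIdeal n) (hy : y ≠ 0) :
    x / y ∈ hv.fracIdeal (n - v y) := by
  rw [div_eq_mul_inv, sub_eq_add_neg, ← hv.map_inv hy]
  exact hv.mul_mem hx (hv.mem_fracIdeal_self _)

end FracIdeal

end IsDiscVal

namespace HasVal

lemma mem (hx : HasVal v x n) (hv : IsDiscVal v) : x ∈ hv.fracIdeal n := Or.inr hx.2.ge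

lemma mul (hx : HasVal v x m) (hv : IsDiscVal v) (hy : HasVal v y n) :
    HasVal v (x * y) (m + n) :=
  ⟨mul_ne_zero hx.1 hy.1, by rw [hv.map_mul _ _ hx.1 hy.1, hx.2, hy.2]⟩

lemma pow (hx : HasVal v x n) (hv : IsDiscVal v) (k : ℕ) : HasVal v (x ^ k) (k * n) :=
  ⟨pow_ne_zero k hx.1, by rw [hv.map_pow hx.1, hx.2]⟩

lemma inv (hx : HasVal v x n) (hv : IsDiscVal v) : HasVal v x⁻¹ (-n) :=
  ⟨inv_ne_zero hx.1, by rw [hv.map_inv hx.1, hx.2]⟩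

lemma neg (hx : HasVal v x n) (hv : IsDiscVal v) : HasVal v (-x) n :=
  ⟨neg_ne_zero.2 hx.1, (hv.map_neg hx.1).trans hx.2⟩

lemma le_of_mem (hx : HasVal v x n) {hv : IsDiscVal v} (h : x ∈ hv.fracIdeal m) : m ≤ n :=
  (hv.le_of_mem_fracIdeal h hx.1).trans_eq hx.2

lemma congr (hx : HasVal v x n) {hv : IsDiscVal v} (h : y - x ∈ hv.fracIdeal (n + 1)) :
    HasVal v y n := by
  have hxn : ∀ {z}, z ∈ hv.fracIdeal (n + 1) → x ≠ z := fun hz hxz =>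
    (Int.lt_succ n).not_ge (hx.le_of_mem (hxz ▸ hz))
  have hy : y ≠ 0 := by
    rintro rfl
    rw [zero_sub] at h
    exact hxn (neg_mem h) (neg_neg x).symm
  refine ⟨hy, le_antisymm ?_ ?_⟩
  · by_contra! hlt
    have hyn : y ∈ hv.fracIdeal (n + 1) := Or.inr hlt
    exact hxn (sub_mem hyn h) (sub_sub_cancel y x).symm
  · have hyn := add_mem (hv.fracIdeal_antitone (Int.lt_succ n).le h) (hx.mem hv)
    rw [sub_add_cancel] at hyn
    exact hv.le_of_mem_fracIdeal hyn hy

end HasVal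

namespace IsDiscVal

lemma mem_of_sum_mem (hv : IsDiscVal v) {ι : Type*} [Fintype ι] {t : ι → K}
    (ht : ∀ i j, t i ≠ 0 → t j ≠ 0 → v (t i) = v (t j) → i = j)
    (h : ∑ i, t i ∈ hv.fracIdeal n) (i : ι) : t i ∈ hv.fracIdeal n := by
  classical
  refine or_iff_not_imp_left.2 fun hi => ?_
  obtain ⟨k, hk, hmin⟩ := Finset.exists_min_image {j | t j ≠ 0} (fun j => v (t j)) ⟨i, by simpa⟩
  simp only [Finset.mem_filter, Finset.mem_univ, true_and] at hk hmin
  have hrest : ∑ j ∈ Finset.univ.erase k, t j ∈ hv.fracIdeal (v (t k) + 1) := by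
    refine sum_mem fun j hj => or_iff_not_imp_left.2 fun hj0 => ?_
    exact (hmin j hj0).lt_of_ne fun he => Finset.ne_of_mem_erase hj (ht j k hj0 hk he.symm)
  have hsum : HasVal v (∑ j, t j) (v (t k)) := by
    refine HasVal.congr ⟨hk, rfl⟩ (hv := hv) ?_
    rwa [← Finset.add_sum_erase _ t (Finset.mem_univ k), add_sub_cancel_left]
  exact (hsum.le_of_mem h).trans (hmin i hi)

lemma hasVal_natCast_of_coprime (hv : IsDiscVal v) {p k : ℕ} (hp : (p : K) ∈ hv.fracIdeal 1)
    (hk : k.Coprime p) : HasVal v (k : K) 0 := by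
  have hmem := hv.natCast_mem k
  have hnot : (k : K) ∉ hv.fracIdeal 1 := fun h => by
    have hbez : (k : K) * k.gcdA p + p * k.gcdB p = 1 := by
      have := Nat.gcd_eq_gcd_ab k p
      rw [hk] at this
      exact_mod_cast congrArg (Int.cast : ℤ → K) this.symm
    have hone := add_mem (hv.mul_intCast_mem h (k.gcdA p)) (hv.mul_intCast_mem hp (k.gcdB p))
    rw [hbez] at hone
    have := HasVal.le_of_mem ⟨one_ne_zero, hv.map_one⟩ hone
    omega
  have h0 : (k : K) ≠ 0 := fun h => hnot (Or.inl h)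
  have hle := hv.le_of_mem_fracIdeal hmem h0
  exact ⟨h0, le_antisymm (by by_contra! hlt; exact hnot (Or.inr hlt)) hle⟩

end IsDiscVal

end Valuation

/-- The polynomial `D(X, Y) = (X ^ p + Y ^ p - (X + Y) ^ p) / p` of Witt vector addition. -/
def wittD {K : Type*} [Field K] (p : ℕ) (x y : K) : K := (x ^ p + y ^ p - (x + y) ^ p) / p

section ArtinSchreier

variable {K : Type*} [Field K] {v : K → ℤ} {p : ℕ} {x y : K}

lemma add_pow_eq_sub_mul_wittD (hp0 : (p : K) ≠ 0) (x y : K) :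
    (x + y) ^ p = x ^ p + y ^ p - p * wittD p x y := by
  rw [wittD, mul_div_cancel₀ _ hp0]
  ring

namespace IsDiscVal

lemma wittD_mem (hv : IsDiscVal v) (hp : p.Prime) {n r s : ℤ} (hx : x ∈ hv.fracIdeal r)
    (hy : y ∈ hv.fracIdeal s) (h₁ : n ≤ r + (p - 1) * s) (h₂ : n ≤ (p - 1) * r + s) :
    wittD p x y ∈ hv.fracIdeal n := by
  by_cases hp0 : (p : K) = 0
  · exact Or.inl (by rw [wittD, hp0, div_zero])
  have hD : wittD p x y = -∑ k ∈ Finset.Ioo 0 p,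
      x * y * (x ^ (k - 1) * y ^ (p - k - 1) * ((p.choose k / p : ℕ) : K)) := by
    rw [wittD, add_pow_prime_eq hp, ← Finset.mul_sum, div_eq_iff hp0]
    ring
  rw [hD]
  refine neg_mem (sum_mem fun k hk => ?_)
  obtain ⟨hk0, hkp⟩ := Finset.mem_Ioo.1 hk
  obtain ⟨i, rfl⟩ : ∃ i, k = i + 1 := ⟨k - 1, by omega⟩
  obtain ⟨j, rfl⟩ : ∃ j, p = i + j + 2 := ⟨p - (i + 2), by omega⟩
  have hexp : i + j + 2 - (i + 1) - 1 = j := by omega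
  rw [add_tsub_cancel_right, hexp]
  refine hv.fracIdeal_antitone ?_ (hv.mul_mem (hv.mul_mem hx hy)
    (hv.mul_mem (hv.mul_mem (hv.pow_mem hx i) (hv.pow_mem hy j)) (hv.natCast_mem _)))
  push_cast at h₁ h₂
  rcases le_total r s with hrs | hsr
  · nlinarith [mul_nonneg (Int.natCast_nonneg j) (sub_nonneg.2 hrs)]
  · nlinarith [mul_nonneg (Int.natCast_nonneg i) (sub_nonneg.2 hsr)]

lemma mem_of_pow_sub_self_mem (hv : IsDiscVal v) (hp : 2 ≤ p) {n : ℤ} (hn : n ≤ 0)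
    (h : x ^ p - x ∈ hv.fracIdeal (p * n)) : x ∈ hv.fracIdeal n := by
  refine or_iff_not_imp_left.2 fun hx => ?_
  by_contra! hlt
  have hpow : HasVal v (x ^ p) (p * v x) := HasVal.pow ⟨hx, rfl⟩ hv p
  have hval : HasVal v (x ^ p - x) (p * v x) := hpow.congr (hv := hv) <| by
    rw [sub_sub_cancel_left]
    exact hv.fracIdeal_antitone (by nlinarith) (neg_mem (hv.mem_fracIdeal_self x))
  have := hval.le_of_mem h
  nlinarith

lemma hasVal_of_hasVal_pow_sub_self (hv : IsDiscVal v) (hp : 2 ≤ p) {n : ℤ} (hn : n < 0)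
    (h : HasVal v (x ^ p - x) (p * n)) : HasVal v x n := by
  have hpow : HasVal v (x ^ p) (p * n) := h.congr (hv := hv) <| by
    rw [sub_sub_cancel]
    exact hv.fracIdeal_antitone (by nlinarith) (hv.mem_of_pow_sub_self_mem hp hn.le (h.mem hv))
  have hx : x ≠ 0 := fun hx => hpow.1 (by rw [hx, zero_pow (by omega)])
  exact ⟨hx, mul_left_cancel₀ (by omega) ((hv.map_pow hx p).symm.trans hpow.2)⟩

-- The difference `h = y - x` satisfies `h = h ^ p - p D(x, h)`, and both terms on the right have
-- larger valuation than `h`.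
lemma eq_of_pow_sub_self_eq (hv : IsDiscVal v) (hp : p.Prime) (hp0 : (p : K) ≠ 0) {E r : ℤ}
    (hE : (p : K) ∈ hv.fracIdeal E) (hr : 0 ≤ r) (hrE : (p - 1) * r < E)
    (hx : x ∈ hv.fracIdeal (-r)) (hxy : y ^ p - y = x ^ p - x)
    (hsub : y - x ∈ hv.fracIdeal 1) : y = x := by
  set h := y - x with hh
  by_contra hne
  have h0 : h ≠ 0 := sub_ne_zero.2 hne
  have hp2 : (2 : ℤ) ≤ p := by exact_mod_cast hp.two_le
  have ht : 1 ≤ v h := hv.le_of_mem_fracIdeal hsub h0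
  have hD : wittD p x h ∈ hv.fracIdeal (v h - (p - 1) * r) :=
    hv.wittD_mem hp hx (hv.mem_fracIdeal_self h) (by nlinarith) (by linarith)
  have heq : h = h ^ p - p * wittD p x h := by
    have hadd := add_pow_eq_sub_mul_wittD hp0 x h
    rw [hh, add_sub_cancel, ← hh] at hadd
    linear_combination hh - hxy + hadd
  have hmem : h ^ p - p * wittD p x h ∈ hv.fracIdeal (v h + 1) :=
    sub_mem (hv.fracIdeal_antitone (by nlinarith) (hv.pow_mem (hv.mem_fracIdeal_self h) p))
      (hv.fracIdeal_antitone (by linarith) (hv.mul_mem hE hD))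
  rw [← heq] at hmem
  have := hv.le_of_mem_fracIdeal hmem h0
  omega

-- `X = x₂ - M x₁` satisfies `X ^ p - X = -M ^ p x₁ + M x₁ + D(x₁, A) + p D(X, M x₁)`, where the
-- first term dominates.
lemma hasVal_reduced_generator (hv : IsDiscVal v) (hp : p.Prime) (hp0 : (p : K) ≠ 0)
    {E b c : ℤ} (hE : (p : K) ∈ hv.fracIdeal E) (hb : 0 < b) (hbE : p * ((p : ℤ) ^ 2 - 1) * b < E)
    (hbc : ((p : ℤ) ^ 2 - 1) * b < c) {x₁ x₂ M A : K} (hx₁ : HasVal v x₁ (-(p * b)))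
    (hM : HasVal v M (-c)) (hA : A ∈ hv.fracIdeal (-((p : ℤ) ^ 2 * b))) (h₁ : x₁ ^ p - x₁ = A)
    (h₂ : x₂ ^ p - x₂ = M ^ p * A + wittD p x₁ A) : HasVal v (x₂ - M * x₁) (-(c + b)) := by
  have hp2 : (2 : ℤ) ≤ p := by exact_mod_cast hp.two_le
  have hpb : b ≤ p * b := by nlinarith
  have hppb : p * b ≤ p * (p * b) := by nlinarith
  have hpppb : p * (p * b) ≤ p * (p * (p * b)) := by nlinarith
  have hpc : p * ((p : ℤ) ^ 2 - 1) * b + p ≤ p * c := by nlinarith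
  have hpb0 : 0 < p * b := mul_pos (by linarith) hb
  have hsq : 0 ≤ p * b * ((p : ℤ) - 1) ^ 2 := mul_nonneg hpb0.le (sq_nonneg _)
  have hDA : wittD p x₁ A ∈ hv.fracIdeal (-(p * (c + b)) + 1) :=
    hv.wittD_mem hp (hx₁.mem hv) hA (by nlinarith) (by nlinarith)
  have hMx₁ : M * x₁ ∈ hv.fracIdeal (-(c + p * b)) :=
    hv.fracIdeal_antitone (by linarith) ((hM.mul hv hx₁).mem hv)
  have hx₂ : x₂ ∈ hv.fracIdeal (-(c + p * b)) := by
    refine hv.mem_of_pow_sub_self_mem hp.two_le (by nlinarith) ?_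
    rw [h₂]
    exact add_mem (hv.fracIdeal_antitone (by linarith)
      (hv.mul_mem (hv.pow_mem (hM.mem hv) p) hA)) (hv.fracIdeal_antitone (by nlinarith) hDA)
  have hDX : wittD p (x₂ - M * x₁) (M * x₁) ∈ hv.fracIdeal (-(p * (c + p * b))) :=
    hv.wittD_mem hp (sub_mem hx₂ hMx₁) hMx₁ (by linarith) (by linarith)
  have heq : (x₂ - M * x₁) ^ p - (x₂ - M * x₁) - -(M ^ p * x₁) =
      M * x₁ + wittD p x₁ A + p * wittD p (x₂ - M * x₁) (M * x₁) := by
    have hadd := add_pow_eq_sub_mul_wittD hp0 (x₂ - M * x₁) (M * x₁)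
    rw [sub_add_cancel, mul_pow] at hadd
    linear_combination h₂ - hadd - M ^ p * h₁
  refine hv.hasVal_of_hasVal_pow_sub_self hp.two_le (by linarith) ?_
  have hdom : HasVal v (-(M ^ p * x₁)) (p * -(c + b)) := by
    convert ((hM.pow hv p).mul hv hx₁).neg hv using 1
    ring
  refine hdom.congr (hv := hv) ?_
  rw [heq]
  refine add_mem (add_mem (hv.fracIdeal_antitone ?_ hMx₁) (hv.fracIdeal_antitone ?_ hDA))
    (hv.fracIdeal_antitone ?_ (hv.mul_mem hE hDX))
  all_goals nlinarith

end IsDiscVal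

end ArtinSchreier

section Operators

variable {F K : Type*} [Field F] [Field K] [Algebra F K] {v : K → ℤ} {hv : IsDiscVal v} {c : ℤ}

/-- The map `φ` raises valuations by at least `c`. -/
def IsDiscVal.RaisesBy (hv : IsDiscVal v) (c : ℤ) (φ : K → K) : Prop :=
  ∀ ⦃n : ℤ⦄ ⦃z : K⦄, z ∈ hv.fracIdeal n → φ z ∈ hv.fracIdeal (n + c)

namespace IsDiscVal.RaisesBy

lemma pow {φ : Module.End F K} (hφ : hv.RaisesBy c φ) (i : ℕ) : hv.RaisesBy (i * c) ⇑(φ ^ i) := by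
  intro n z hz
  induction i with
  | zero => simpa using hz
  | succ i ih =>
    rw [pow_succ', Module.End.mul_apply, Nat.cast_succ, add_one_mul, ← add_assoc]
    exact hφ ih

lemma of_sub_one {τ : Module.End F K} (hτ : hv.RaisesBy c ⇑(τ - 1)) (hc : 0 ≤ c) :
    hv.RaisesBy 0 τ := by
  intro n z hz
  have := add_mem (hv.fracIdeal_antitone (by omega) (hτ hz)) hz
  rwa [LinearMap.sub_apply, Module.End.one_apply, sub_add_cancel, ← add_zero n] at this

-- With `Y = τ - 1`, the geometric sum is `∑ k, (p choose k + 1) Y ^ k`; all coefficients except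
-- the last one are divisible by `p`.
lemma geom_sum {p : ℕ} (hp : p.Prime) {τ : Module.End F K} (hτ : hv.RaisesBy c ⇑(τ - 1))
    (hc : 0 ≤ c) (hpc : (p : K) ∈ hv.fracIdeal ((p - 1) * c)) :
    hv.RaisesBy ((p - 1) * c) ⇑(∑ j ∈ Finset.range p, τ ^ j) := by
  have hgeom : ∑ j ∈ Finset.range p, τ ^ j =
      ∑ k ∈ Finset.range p, p.choose (k + 1) • (τ - 1) ^ k := by
    have := congrArg (Polynomial.aeval (τ - 1))
      (Polynomial.geom_sum_X_comp_X_add_one_eq_sum (R := F) p)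
    simpa [Polynomial.aeval_comp] using this
  intro n z hz
  rw [hgeom, LinearMap.sum_apply]
  refine sum_mem fun k hk => ?_
  rw [LinearMap.smul_apply]
  have hYk := hτ.pow k hz
  rcases Nat.lt_or_ge (k + 1) p with hlt | hge
  · obtain ⟨q, hq⟩ := hp.dvd_choose_self k.succ_ne_zero hlt
    rw [hq, mul_nsmul]
    refine nsmul_mem ?_ q
    rw [nsmul_eq_mul]
    refine hv.fracIdeal_antitone ?_ (hv.mul_mem hpc hYk)
    nlinarith [mul_nonneg (Int.natCast_nonneg k) hc]
  · obtain rfl : p = k + 1 := by have := Finset.mem_range.1 hk; omega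
    rw [Nat.cast_succ, add_sub_cancel_right]
    exact nsmul_mem hYk _

end IsDiscVal.RaisesBy

lemma iterate_sub_descFactorial_mem {φ : Module.End F K} (hφ : hv.RaisesBy c φ) {w e : ℤ}
    {g : ℕ → K} {n : ℕ}
    (hg : ∀ k ≤ n, φ (g k) - k • g (k - 1) ∈ hv.fracIdeal (w - k * c + c + e)) (i : ℕ) :
    (φ ^ i) (g n) - n.descFactorial i • g (n - i) ∈ hv.fracIdeal (w - n * c + i * c + e) := by
  induction i with
  | zero => simp
  | succ i ih =>
    have hsplit : (φ ^ (i + 1)) (g n) - n.descFactorial (i + 1) • g (n - (i + 1)) =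
        φ ((φ ^ i) (g n) - n.descFactorial i • g (n - i)) +
          n.descFactorial i • (φ (g (n - i)) - (n - i) • g (n - i - 1)) := by
      rw [pow_succ', Module.End.mul_apply, map_sub, map_nsmul, Nat.descFactorial_succ, mul_comm,
        mul_smul, smul_sub, Nat.sub_sub]
      abel
    rw [hsplit]
    refine add_mem (hv.fracIdeal_antitone (by push_cast; linarith) (hφ ih)) ?_
    rcases Nat.lt_or_ge n i with hlt | hle
    · rw [Nat.descFactorial_of_lt hlt, zero_smul]
      exact zero_mem _
    · refine nsmul_mem (hv.fracIdeal_antitone ?_ (hg (n - i) (Nat.sub_le n i))) _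
      push_cast [hle]
      linarith

end Operators

section Families

variable {F K : Type*} [Field F] [Field K] [Algebra F K] {v₀ : F → ℤ} {v : K → ℤ} {N : ℤ}
  {ι : Type*} [Fintype ι] {f : ι → K}

/-- The valuation `v` extends `v₀` with ramification index `N`. -/
def HasRamificationIndex (v₀ : F → ℤ) (v : K → ℤ) (N : ℤ) : Prop :=
  ∀ x : F, x ≠ 0 → v (algebraMap F K x) = N * v₀ x

/-- The valuations of the family `f` are pairwise distinct modulo `N`. -/
structure HasDistinctVal (v : K → ℤ) (N : ℤ) {ι : Type*} (f : ι → K) : Prop where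
  ne_zero : ∀ i, f i ≠ 0
  eq_of_dvd : ∀ i j, N ∣ v (f i) - v (f j) → i = j

lemma HasRamificationIndex.hasVal (hram : HasRamificationIndex (K := K) v₀ v N) {x : F}
    (hx : x ≠ 0) : HasVal v (algebraMap F K x) (N * v₀ x) :=
  ⟨by simpa using hx, hram x hx⟩

lemma HasRamificationIndex.natCast_mem_fracIdeal_one
    (hram : HasRamificationIndex (K := K) v₀ v N) (hv : IsDiscVal v) (hN : 0 < N) {k : ℕ}
    (hk : 0 < v₀ (k : F)) : (k : K) ∈ hv.fracIdeal 1 := by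
  by_cases hk0 : (k : F) = 0
  · exact Or.inl (by rw [← map_natCast (algebraMap F K), hk0, map_zero])
  · rw [← map_natCast (algebraMap F K)]
    exact hv.fracIdeal_antitone (Int.add_one_le_iff.2 (mul_pos hN hk))
      ((hram.hasVal hk0).mem hv)

lemma HasVal.smul {x : K} {n : ℤ} (hx : HasVal v x n) (hv : IsDiscVal v)
    (hram : HasRamificationIndex (K := K) v₀ v N) {a : F} (ha : a ≠ 0) :
    HasVal v (a • x) (N * v₀ a + n) := by
  rw [Algebra.smul_def]
  exact (hram.hasVal ha).mul hv hx

namespace HasDistinctVal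

lemma smul_mem_of_sum_mem (hf : HasDistinctVal v N f) (hv : IsDiscVal v)
    (hram : HasRamificationIndex (K := K) v₀ v N) {n : ℤ} {a : ι → F}
    (h : ∑ i, a i • f i ∈ hv.fracIdeal n) (i : ι) : a i • f i ∈ hv.fracIdeal n := by
  refine hv.mem_of_sum_mem (fun i j hi hj hij => hf.eq_of_dvd i j ?_) h i
  have hval : ∀ k, a k • f k ≠ 0 → v (a k • f k) = N * v₀ (a k) + v (f k) := fun k hk =>
    (HasVal.smul ⟨hf.ne_zero k, rfl⟩ hv hram (left_ne_zero_of_smul hk)).2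
  rw [hval i hi, hval j hj] at hij
  exact ⟨v₀ (a j) - v₀ (a i), by linear_combination hij⟩

lemma linearIndependent {κ : Type*} [Finite κ] {f : κ → K} (hf : HasDistinctVal v N f)
    (hv : IsDiscVal v) (hram : HasRamificationIndex (K := K) v₀ v N) : LinearIndependent F f := by
  cases nonempty_fintype κ
  rw [Fintype.linearIndependent_iff]
  intro a ha i
  by_contra hi
  have h0 : a i • f i ≠ 0 := smul_ne_zero hi (hf.ne_zero i)
  have hmem : ∑ i, a i • f i ∈ hv.fracIdeal (v (a i • f i) + 1) := Or.inl ha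
  have := hv.le_of_mem_fracIdeal (hf.smul_mem_of_sum_mem hv hram hmem i) h0
  omega

variable [FiniteDimensional F K]

lemma exists_eq_sum_smul (hf : HasDistinctVal v N f) (hv : IsDiscVal v)
    (hram : HasRamificationIndex (K := K) v₀ v N)
    (hcard : Fintype.card ι = Module.finrank F K) (z : K) : ∃ a : ι → F, z = ∑ i, a i • f i := by
  have hz : z ∈ Submodule.span F (Set.range f) := by
    rw [(hf.linearIndependent hv hram).span_eq_top_of_card_eq_finrank' hcard]
    trivial
  obtain ⟨a, ha⟩ := (Submodule.mem_span_range_iff_exists_fun F).1 hz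
  exact ⟨a, ha.symm⟩

lemma raisesBy (hf : HasDistinctVal v N f) (hv : IsDiscVal v)
    (hram : HasRamificationIndex (K := K) v₀ v N)
    (hcard : Fintype.card ι = Module.finrank F K) {φ : Module.End F K} {c : ℤ}
    (hφ : ∀ i, φ (f i) ∈ hv.fracIdeal (v (f i) + c)) : hv.RaisesBy c φ := by
  intro n z hz
  obtain ⟨a, rfl⟩ := hf.exists_eq_sum_smul hv hram hcard z
  rw [map_sum]
  refine sum_mem fun i _ => ?_
  rw [map_smul]
  by_cases ha : a i = 0
  · exact Or.inl (by rw [ha, zero_smul])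
  have hle := (HasVal.smul ⟨hf.ne_zero i, rfl⟩ hv hram ha).le_of_mem
    (hf.smul_mem_of_sum_mem hv hram hz i)
  rw [Algebra.smul_def]
  exact hv.fracIdeal_antitone (by linarith) (hv.mul_mem ((hram.hasVal ha).mem hv) (hφ i))

lemma mem_integers_iff (hf : HasDistinctVal v N f) (hv : IsDiscVal v) (hv₀ : IsDiscVal v₀)
    (hram : HasRamificationIndex (K := K) v₀ v N)
    (hcard : Fintype.card ι = Module.finrank F K)
    (hN : ∀ i, 0 ≤ v (f i) ∧ v (f i) < N) (z : K) :
    z ∈ hv.fracIdeal 0 ↔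
      ∃ a : ι → F, (∀ i, a i ∈ hv₀.fracIdeal 0) ∧ z = ∑ i, algebraMap F K (a i) * f i := by
  simp only [← Algebra.smul_def]
  have hval : ∀ (a : ι → F) i, a i ≠ 0 → HasVal v (a i • f i) (N * v₀ (a i) + v (f i)) :=
    fun a i ha => HasVal.smul ⟨hf.ne_zero i, rfl⟩ hv hram ha
  constructor
  · intro hz
    obtain ⟨a, rfl⟩ := hf.exists_eq_sum_smul hv hram hcard z
    refine ⟨a, fun i => or_iff_not_imp_left.2 fun ha => ?_, rfl⟩
    have := (hval a i ha).le_of_mem (hf.smul_mem_of_sum_mem hv hram hz i)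
    by_contra! hlt
    nlinarith [hN i]
  · rintro ⟨a, ha, rfl⟩
    refine sum_mem fun i _ => ?_
    by_cases h0 : a i = 0
    · exact Or.inl (by rw [h0, zero_smul])
    have := hv₀.le_of_mem_fracIdeal (ha i) h0
    exact hv.fracIdeal_antitone (by nlinarith [hN i]) ((hval a i h0).mem hv)

lemma exists_leading_term (hf : HasDistinctVal v N f) (hv : IsDiscVal v)
    (hram : HasRamificationIndex (K := K) v₀ v N)
    (hcard : Fintype.card ι = Module.finrank F K) {z : K} {w : ℤ} (hz : HasVal v z w) {i₀ : ι}
    (hi₀ : N ∣ w - v (f i₀)) :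
    ∃ a : F, HasVal v (a • f i₀) w ∧ z - a • f i₀ ∈ hv.fracIdeal (w + 1) := by
  classical
  obtain ⟨a, rfl⟩ := hf.exists_eq_sum_smul hv hram hcard z
  have hrest : ∑ i, a i • f i - a i₀ • f i₀ ∈ hv.fracIdeal (w + 1) := by
    rw [← Finset.add_sum_erase _ _ (Finset.mem_univ i₀), add_sub_cancel_left]
    refine sum_mem fun i hi => or_iff_not_imp_left.2 fun h0 => ?_
    have hval := HasVal.smul ⟨hf.ne_zero i, rfl⟩ hv hram (left_ne_zero_of_smul h0)
    refine (hv.le_of_mem_fracIdeal (hf.smul_mem_of_sum_mem hv hram (hz.mem hv) i) h0).lt_of_ne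
      fun heq => Finset.ne_of_mem_erase hi (hf.eq_of_dvd i i₀ ?_)
    obtain ⟨t, ht⟩ := hi₀
    exact ⟨t - v₀ (a i), by linear_combination ht - heq - hval.2⟩
  refine ⟨a i₀, hz.congr (hv := hv) ?_, hrest⟩
  rw [← neg_sub]
  exact neg_mem hrest

end HasDistinctVal

end Families

section FallingFactorials

variable {K : Type*} [Field K] {v : K → ℤ} {r t : ℤ} {x y : K}

lemma descPochhammer_eval_add_one_sub (x : K) (n : ℕ) :
    (descPochhammer K n).eval (x + 1) - (descPochhammer K n).eval x =
      n • (descPochhammer K (n - 1)).eval x := by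
  rcases n with _ | n
  · simp
  · rw [descPochhammer_succ_eval n x, descPochhammer_succ_left]
    simp only [Polynomial.eval_mul, Polynomial.eval_X, Polynomial.eval_comp, Polynomial.eval_sub,
      Polynomial.eval_one, add_sub_cancel_right, nsmul_eq_mul, Nat.cast_succ,
      Nat.add_sub_cancel]
    ring

lemma descPochhammer_eval_add (x y : K) {n p : ℕ} (hn : n < p) :
    (descPochhammer K n).eval (x + y) = ∑ i ∈ Finset.range p,
      n.choose i * ((descPochhammer K i).eval y * (descPochhammer K (n - i)).eval x) := by
  have hsmeval : ∀ (k : ℕ) (z : K),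
      (descPochhammer ℤ k).smeval z = (descPochhammer K k).eval z := fun k z => by
    rw [← Polynomial.aeval_eq_smeval, ← Polynomial.eval_map_algebraMap, descPochhammer_map]
  have hadd := Ring.descPochhammer_smeval_add n (Commute.all y x)
  simp only [hsmeval] at hadd
  rw [add_comm, hadd, Finset.Nat.sum_antidiagonal_eq_sum_range_succ (fun i j => (n.choose i : K) *
    ((descPochhammer K i).eval y * (descPochhammer K j).eval x))]
  refine Finset.sum_subset (Finset.range_mono hn) fun i _ hi => ?_
  rw [Nat.choose_eq_zero_of_lt (by simpa using hi), Nat.cast_zero, zero_mul]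

lemma map_descPochhammer_eval {G : Type*} [FunLike G K K] [RingHomClass G K K] (f : G) (x : K)
    (n : ℕ) : f ((descPochhammer K n).eval x) = (descPochhammer K n).eval (f x) := by
  simp [descPochhammer_eval_eq_prod_range, map_prod]

namespace IsDiscVal

variable (hv : IsDiscVal v)

lemma prod_range_sub_mem {a : ℕ → K} (hx : x ∈ hv.fracIdeal r) (ha : ∀ k, a k ∈ hv.fracIdeal r)
    (n : ℕ) : ∏ k ∈ Finset.range n, (x - a k) ∈ hv.fracIdeal (n * r) := by
  induction n with
  | zero => simpa using hv.one_mem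
  | succ n ih =>
    rw [Finset.prod_range_succ, Nat.cast_succ, add_one_mul]
    exact hv.mul_mem ih (sub_mem hx (ha n))

lemma prod_range_add_sub_mem {a : ℕ → K} (hx : x ∈ hv.fracIdeal r) (hy : y ∈ hv.fracIdeal t)
    (hrt : r ≤ t) (ha : ∀ k, a k ∈ hv.fracIdeal r) (n : ℕ) :
    ∏ k ∈ Finset.range n, (x + y - a k) - ∏ k ∈ Finset.range n, (x - a k) ∈
      hv.fracIdeal (n * r + (t - r)) := by
  induction n with
  | zero => simp
  | succ n ih =>
    have hsplit : ∏ k ∈ Finset.range (n + 1), (x + y - a k) -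
        ∏ k ∈ Finset.range (n + 1), (x - a k) =
        (∏ k ∈ Finset.range n, (x + y - a k) - ∏ k ∈ Finset.range n, (x - a k)) *
          (x + y - a n) + (∏ k ∈ Finset.range n, (x - a k)) * y := by
      rw [Finset.prod_range_succ, Finset.prod_range_succ]
      ring
    have hxy := sub_mem (add_mem hx (hv.fracIdeal_antitone hrt hy)) (ha n)
    rw [hsplit]
    refine add_mem (hv.fracIdeal_antitone ?_ (hv.mul_mem ih hxy))
      (hv.fracIdeal_antitone ?_ (hv.mul_mem (hv.prod_range_sub_mem hx ha n) hy))
    all_goals push_cast; linarith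

lemma add_pow_sub_pow_mem (hx : x ∈ hv.fracIdeal r) (hy : y ∈ hv.fracIdeal t) (hrt : r ≤ t)
    (n : ℕ) : (x + y) ^ n - x ^ n ∈ hv.fracIdeal (n * r + (t - r)) := by
  simpa using hv.prod_range_add_sub_mem hx hy hrt (a := 0) (fun _ => zero_mem _) n

lemma descPochhammer_eval_mem (hx : x ∈ hv.fracIdeal r) (hr : r ≤ 0) (n : ℕ) :
    (descPochhammer K n).eval x ∈ hv.fracIdeal (n * r) := by
  rw [descPochhammer_eval_eq_prod_range]
  exact hv.prod_range_sub_mem hx (fun k => hv.fracIdeal_antitone hr (hv.natCast_mem k)) n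

lemma descPochhammer_eval_add_sub_mem (hx : x ∈ hv.fracIdeal r) (hr : r ≤ 0)
    (hy : y ∈ hv.fracIdeal t) (hrt : r ≤ t) (n : ℕ) :
    (descPochhammer K n).eval (x + y) - (descPochhammer K n).eval x ∈
      hv.fracIdeal (n * r + (t - r)) := by
  simp only [descPochhammer_eval_eq_prod_range]
  exact hv.prod_range_add_sub_mem hx hy hrt
    (fun k => hv.fracIdeal_antitone hr (hv.natCast_mem k)) n

end IsDiscVal

lemma HasVal.descPochhammer_eval (hx : HasVal v x r) (hv : IsDiscVal v) (hr : r < 0) (n : ℕ) :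
    HasVal v ((descPochhammer K n).eval x) (n * r) := by
  induction n with
  | zero => simpa using ⟨one_ne_zero, hv.map_one⟩
  | succ n ih =>
    have hsub : HasVal v (x - n) r := hx.congr (hv := hv) <| by
      rw [sub_sub_cancel_left]
      exact hv.fracIdeal_antitone (by omega) (neg_mem (hv.natCast_mem n))
    rw [descPochhammer_succ_eval, Nat.cast_succ, add_one_mul]
    exact ih.mul hv hsub

end FallingFactorials

section Scaffold

variable {F K : Type*} [Field F] [Field K] [Algebra F K] {v₀ : F → ℤ} {v : K → ℤ}
  {hv : IsDiscVal v} {p : ℕ} {b₁ b₂ : ℤ} {g : ℕ → ℕ → K} {Ψ₁ Ψ₂ : Module.End F K}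

/-- A scaffold: the operators `Ψ₁`, `Ψ₂` act on the doubly indexed family `g` like the two partial
derivatives on monomials, up to terms of higher valuation. The truncated subtractions `i - 1`
and `j - 1` are harmless, since for `i = 0` or `j = 0` the term has coefficient zero. -/
structure IsScaffold (hv : IsDiscVal v) (p : ℕ) (b₁ b₂ : ℤ) (g : ℕ → ℕ → K)
    (Ψ₁ Ψ₂ : Module.End F K) : Prop where
  hasVal : ∀ i j, HasVal v (g i j) (-(i * (p * b₁) + j * b₂))
  raisesBy₁ : hv.RaisesBy (p * b₁) Ψ₁
  raisesBy₂ : hv.RaisesBy b₂ Ψ₂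
  deriv₁ : ∀ i j, i < p → j < p →
    Ψ₁ (g i j) - i • g (i - 1) j ∈ hv.fracIdeal (-(i * (p * b₁) + j * b₂) + p * b₁ + 1)
  deriv₂ : ∀ i j, i < p → j < p →
    Ψ₂ (g i j) - j • g i (j - 1) ∈ hv.fracIdeal (-(i * (p * b₁) + j * b₂) + b₂ + 1)

lemma digits_eq_of_sq_dvd (hp : p.Prime) (hb₁ : ¬ (p : ℤ) ∣ b₁) (hb : (p : ℤ) ^ 2 ∣ b₂ - b₁)
    {i j i' j' : ℕ} (hi : i < p) (hj : j < p) (hi' : i' < p) (hj' : j' < p)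
    (h : (p : ℤ) ^ 2 ∣ (i * (p * b₁) + j * b₂) - (i' * (p * b₁) + j' * b₂)) :
    i = i' ∧ j = j' := by
  have hpb : (p : ℤ) ^ 2 ∣ b₁ * (((i : ℤ) - i') * p + (j - j')) := by
    have heq : b₁ * (((i : ℤ) - i') * p + (j - j')) =
        (i * (p * b₁) + j * b₂) - (i' * (p * b₁) + j' * b₂) - (b₂ - b₁) * (j - j') := by ring
    rw [heq]
    exact dvd_sub h (hb.mul_right _)
  have hcop : IsCoprime ((p : ℤ) ^ 2) b₁ :=
    ((Nat.prime_iff_prime_int.1 hp).coprime_iff_not_dvd.2 hb₁).pow_left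
  obtain ⟨t, ht⟩ := hcop.dvd_of_dvd_mul_left hpb
  have hp0 : (p : ℤ) ≠ 0 := by exact_mod_cast hp.ne_zero
  have hjj : (j : ℤ) - j' = 0 :=
    Int.eq_zero_of_abs_lt_dvd (m := p) ⟨p * t - (i - i'), by linear_combination ht⟩
      (abs_lt.2 (by omega))
  have hii : (i : ℤ) - i' = 0 :=
    Int.eq_zero_of_abs_lt_dvd (m := p)
      ⟨t, mul_right_cancel₀ hp0 (by linear_combination ht - hjj)⟩ (abs_lt.2 (by omega))
  omega

lemma hasDistinctVal_of_hasVal (hp : p.Prime) (hb₁ : ¬ (p : ℤ) ∣ b₁) (hb : (p : ℤ) ^ 2 ∣ b₂ - b₁)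
    (hg : ∀ i j, HasVal v (g i j) (-(i * (p * b₁) + j * b₂))) :
    HasDistinctVal v ((p : ℤ) ^ 2) fun s : Fin p × Fin p => g s.1 s.2 where
  ne_zero s := (hg _ _).1
  eq_of_dvd s t h := by
    rw [(hg _ _).2, (hg _ _).2, neg_sub_neg] at h
    obtain ⟨h₁, h₂⟩ := digits_eq_of_sq_dvd hp hb₁ hb t.1.2 t.2.2 s.1.2 s.2.2 h
    exact (Prod.ext (Fin.ext h₁) (Fin.ext h₂)).symm

lemma HasVal.descFactorial_nsmul (hv : IsDiscVal v) (hp : p.Prime)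
    (hp1 : (p : K) ∈ hv.fracIdeal 1) {q k : ℕ} (hq : q < p) (hk : k ≤ q) {x : K} {n : ℤ}
    (hx : HasVal v x n) : HasVal v (q.descFactorial k • x) n := by
  have hcop : (q.descFactorial k).Coprime p := by
    refine Nat.Coprime.coprime_dvd_left ?_ (hp.coprime_factorial_of_lt hq).symm
    exact ⟨(q - k).factorial, by rw [mul_comm, Nat.factorial_mul_descFactorial hk]⟩
  rw [nsmul_eq_mul, ← zero_add n]
  exact (hv.hasVal_natCast_of_coprime hp1 hcop).mul hv hx

namespace IsScaffold

-- Up to higher order terms, `Ψ₂ ^ j Ψ₁ ^ i` sends the top monomial to the product of two falling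
-- factorials, which are units, and a monomial.
lemma hasVal_pow_apply_top (h : IsScaffold hv p b₁ b₂ g Ψ₁ Ψ₂) (hp : p.Prime)
    (hp1 : (p : K) ∈ hv.fracIdeal 1) {i j : ℕ} (hi : i < p) (hj : j < p) :
    HasVal v ((Ψ₂ ^ j) ((Ψ₁ ^ i) (g (p - 1) (p - 1))))
      (-((p - 1) * (p * b₁) + (p - 1) * b₂) + i * (p * b₁) + j * b₂) := by
  have hq : p - 1 < p := Nat.sub_lt hp.pos one_pos
  have hcast : ((p - 1 : ℕ) : ℤ) = p - 1 := by simp [hp.one_le]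
  set q := p - 1
  have h₁ := iterate_sub_descFactorial_mem h.raisesBy₁ (w := -(q * b₂)) (e := 1)
    (g := fun k => g k q) (n := q)
    (fun k hk => hv.fracIdeal_antitone (by linarith) (h.deriv₁ k q (by omega) hq)) i
  have h₂ := iterate_sub_descFactorial_mem h.raisesBy₂ (w := -((q - i : ℕ) * (p * b₁))) (e := 1)
    (g := fun k => g (q - i) k) (n := q)
    (fun k hk => hv.fracIdeal_antitone (by linarith) (h.deriv₂ (q - i) k (by omega) (by omega))) j
  have htop : HasVal v (q.descFactorial i • q.descFactorial j • g (q - i) (q - j))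
      (-((p - 1) * (p * b₁) + (p - 1) * b₂) + i * (p * b₁) + j * b₂) := by
    refine HasVal.descFactorial_nsmul hv hp hp1 hq (by omega)
      (HasVal.descFactorial_nsmul hv hp hp1 hq (by omega) ?_)
    convert h.hasVal (q - i) (q - j) using 1
    rw [Nat.cast_sub (show i ≤ q by omega), Nat.cast_sub (show j ≤ q by omega), hcast]
    ring
  refine htop.congr (hv := hv) ?_
  have hsplit : (Ψ₂ ^ j) ((Ψ₁ ^ i) (g q q)) -
      q.descFactorial i • q.descFactorial j • g (q - i) (q - j) =
      (Ψ₂ ^ j) ((Ψ₁ ^ i) (g q q) - q.descFactorial i • g (q - i) q) +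
      q.descFactorial i •
        ((Ψ₂ ^ j) (g (q - i) q) - q.descFactorial j • g (q - i) (q - j)) := by
    rw [map_sub, map_nsmul, smul_sub]
    abel
  rw [hsplit]
  refine add_mem (hv.fracIdeal_antitone ?_ (h.raisesBy₂.pow j h₁))
    (nsmul_mem (hv.fracIdeal_antitone ?_ h₂) _)
  · rw [hcast]; linarith
  · rw [Nat.cast_sub (show i ≤ q by omega), hcast]; linarith

theorem hasVal_pow_apply [FiniteDimensional F K] (h : IsScaffold hv p b₁ b₂ g Ψ₁ Ψ₂)
    (hp : p.Prime) (hp1 : (p : K) ∈ hv.fracIdeal 1) (hb₁ : ¬ (p : ℤ) ∣ b₁)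
    (hb : (p : ℤ) ^ 2 ∣ b₂ - b₁) (hram : HasRamificationIndex (K := K) v₀ v ((p : ℤ) ^ 2))
    (hdeg : Module.finrank F K = p ^ 2) {ρ : K} {w : ℤ} (hρ : HasVal v ρ w)
    (hw : (p : ℤ) ^ 2 ∣ w - b₂) {i j : ℕ} (hi : i < p) (hj : j < p) :
    HasVal v ((Ψ₂ ^ j) ((Ψ₁ ^ i) ρ)) (w + i * (p * b₁) + j * b₂) := by
  have hcard : Fintype.card (Fin p × Fin p) = Module.finrank F K := by simp [hdeg, sq]
  have hcast : ((p - 1 : ℕ) : ℤ) = p - 1 := by simp [hp.one_le]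
  let top : Fin p := ⟨p - 1, Nat.sub_lt hp.pos one_pos⟩
  have htop : (p : ℤ) ^ 2 ∣ w - v (g (p - 1) (p - 1)) := by
    rw [(h.hasVal _ _).2, hcast]
    have heq : w - -((p - 1 : ℤ) * (p * b₁) + (p - 1) * b₂) =
        (w - b₂) + (b₂ - b₁) * p + p ^ 2 * b₁ := by ring
    rw [heq]
    exact dvd_add (dvd_add hw (hb.mul_right _)) (dvd_mul_right _ _)
  obtain ⟨a, ha, hrest⟩ := (hasDistinctVal_of_hasVal hp hb₁ hb h.hasVal).exists_leading_term
    hv hram hcard hρ (i₀ := (top, top)) htop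
  have ha0 : a ≠ 0 := left_ne_zero_of_smul ha.1
  have hw' := ha.2.symm.trans ((h.hasVal (p - 1) (p - 1)).smul hv hram ha0).2
  have hlead : HasVal v ((Ψ₂ ^ j) ((Ψ₁ ^ i) (a • g (p - 1) (p - 1))))
      (w + i * (p * b₁) + j * b₂) := by
    rw [map_smul, map_smul]
    convert (h.hasVal_pow_apply_top hp hp1 hi hj).smul hv hram ha0 using 1
    rw [hw', hcast]
    ring
  refine hlead.congr (hv := hv) ?_
  rw [← map_sub, ← map_sub]
  exact hv.fracIdeal_antitone (by linarith) (h.raisesBy₂.pow j (h.raisesBy₁.pow i hrest))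

end IsScaffold

end Scaffold

section TruncatedPower

variable {F K : Type*} [Field F] [Field K] [Algebra F K] {v : K → ℤ} {hv : IsDiscVal v} {p : ℕ}

/-- The power `(1 + Y) ^ μ` given by the binomial series, truncated before degree `p`; the binomial
coefficients of `μ` are spelled out as quotients of products. -/
def truncatedPow (p : ℕ) (Y : Module.End F K) (μ : F) : Module.End F K :=
  ∑ i ∈ Finset.range p, ((∏ k ∈ Finset.range i, (μ - (k : F))) / (i.factorial : F)) • Y ^ i

lemma commute_truncatedPow {Y Z : Module.End F K} (h : Commute Y Z) (μ : F) :
    Commute (truncatedPow p Y μ) Z :=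
  Commute.sum_left _ _ _ fun i _ => (h.pow_left i).smul_left _

lemma algebraMap_prod_sub_div_factorial_smul (μ : F) (i : ℕ) (z : K) :
    ((∏ k ∈ Finset.range i, (μ - (k : F))) / (i.factorial : F)) • z =
      (descPochhammer K i).eval (algebraMap F K μ) * (i.factorial : K)⁻¹ * z := by
  rw [Algebra.smul_def, descPochhammer_eval_eq_prod_range, div_eq_mul_inv, map_mul, map_prod,
    map_inv₀, map_natCast]
  simp only [map_sub, map_natCast]

-- The Vandermonde identity for falling factorials, up to terms of higher valuation.
lemma truncatedPow_descPochhammer_sub_mem (hp : p.Prime) (hp1 : (p : K) ∈ hv.fracIdeal 1)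
    {Y : Module.End F K} {b c e : ℤ} (hY : hv.RaisesBy c Y) {μ : F}
    (hμ : algebraMap F K μ ∈ hv.fracIdeal (b - c)) (hb : 0 ≤ b) (hbc : b ≤ c) {X : K} {n : ℕ}
    (hn : n < p) (hX : ∀ k ≤ n, Y ((descPochhammer K k).eval X) -
      k • (descPochhammer K (k - 1)).eval X ∈ hv.fracIdeal (-(k * c) + c + e)) :
    truncatedPow p Y μ ((descPochhammer K n).eval X) -
      (descPochhammer K n).eval (X + algebraMap F K μ) ∈ hv.fracIdeal (-(n * c) + b + e) := by
  have hfac : ∀ i < p, HasVal v (i.factorial : K) 0 := fun i hi =>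
    hv.hasVal_natCast_of_coprime hp1 (hp.coprime_factorial_of_lt hi).symm
  have hsplit : truncatedPow p Y μ ((descPochhammer K n).eval X) -
      (descPochhammer K n).eval (X + algebraMap F K μ) = ∑ i ∈ Finset.range p,
        (descPochhammer K i).eval (algebraMap F K μ) * (i.factorial : K)⁻¹ *
          ((Y ^ i) ((descPochhammer K n).eval X) -
            n.descFactorial i • (descPochhammer K (n - i)).eval X) := by
    rw [truncatedPow, LinearMap.sum_apply, descPochhammer_eval_add X _ hn,
      ← Finset.sum_sub_distrib]
    refine Finset.sum_congr rfl fun i hi => ?_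
    have hi0 := (hfac i (Finset.mem_range.1 hi)).1
    rw [LinearMap.smul_apply, algebraMap_prod_sub_div_factorial_smul, nsmul_eq_mul,
      Nat.descFactorial_eq_factorial_mul_choose]
    push_cast
    field_simp
  rw [hsplit]
  refine sum_mem fun i hi => ?_
  rcases i with _ | i
  · simp
  have hcoeff := hv.mul_mem (hv.descPochhammer_eval_mem hμ (by omega) (i + 1))
    (((hfac (i + 1) (Finset.mem_range.1 hi)).inv hv).mem hv)
  have herr := iterate_sub_descFactorial_mem hY (w := 0) (e := e) (n := n)
    (g := fun k => (descPochhammer K k).eval X)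
    (fun k hk => hv.fracIdeal_antitone (by linarith) (hX k hk)) (i + 1)
  refine hv.fracIdeal_antitone ?_ (hv.mul_mem hcoeff herr)
  push_cast
  nlinarith [mul_nonneg (Int.natCast_nonneg i) hb]

end TruncatedPower

section Differences

variable {K : Type*} [Field K] {v : K → ℤ} {r t : ℤ} {x y : K}

namespace IsDiscVal

lemma descPochhammer_eval_sub_sub_mem (hv : IsDiscVal v) (hx : x ∈ hv.fracIdeal r) (hr : r ≤ 0)
    (hy : y - x - 1 ∈ hv.fracIdeal t) (hrt : r ≤ t) (n : ℕ) :
    (descPochhammer K n).eval y - (descPochhammer K n).eval x -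
      n • (descPochhammer K (n - 1)).eval x ∈ hv.fracIdeal (n * r + (t - r)) := by
  have hx1 := add_mem hx (hv.fracIdeal_antitone hr hv.one_mem)
  have := hv.descPochhammer_eval_add_sub_mem hx1 hr hy hrt n
  rwa [← descPochhammer_eval_add_one_sub, sub_sub_sub_cancel_right,
    show y = x + 1 + (y - x - 1) by ring]

lemma pow_sub_sub_mem (hv : IsDiscVal v) (hx : x ∈ hv.fracIdeal r) (hr : r < 0)
    (hy : y - x - 1 ∈ hv.fracIdeal 1) (n : ℕ) :
    y ^ n - x ^ n - n • x ^ (n - 1) ∈ hv.fracIdeal (n * r + (1 - r)) := by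
  have hyx : y - x ∈ hv.fracIdeal 0 := by
    simpa using add_mem (hv.fracIdeal_antitone zero_le_one hy) hv.one_mem
  have hyr : y ∈ hv.fracIdeal r := by
    simpa using add_mem (hv.fracIdeal_antitone hr.le hyx) hx
  induction n with
  | zero => simp
  | succ n ih =>
    have hsplit : y ^ (n + 1) - x ^ (n + 1) - (n + 1) • x ^ n =
        y * (y ^ n - x ^ n - n • x ^ (n - 1)) + (y - x - 1) * x ^ n +
          n • ((y - x) * x ^ (n - 1)) := by
      rcases n with _ | n
      · simp
      · simp only [nsmul_eq_mul, Nat.add_sub_cancel]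
        push_cast
        ring
    rw [Nat.add_sub_cancel, hsplit]
    refine add_mem (add_mem (hv.fracIdeal_antitone ?_ (hv.mul_mem hyr ih))
      (hv.fracIdeal_antitone ?_ (hv.mul_mem hy (hv.pow_mem hx n)))) ?_
    · push_cast; linarith
    · push_cast; linarith
    · rcases n with _ | n
      · simp
      · refine nsmul_mem (hv.fracIdeal_antitone ?_ (hv.mul_mem hyx (hv.pow_mem hx n))) _
        push_cast
        linarith

end IsDiscVal

end Differences

section GaloisAction

variable {F K : Type*} [Field F] [Field K] [Algebra F K] {v₀ : F → ℤ} {v : K → ℤ}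
  {hv : IsDiscVal v} {p : ℕ} {b₁ b₂ : ℤ} {μ : F} {x₁ X : K}

/-- The family `x₁ ^ i (X)_j`, with `(X)_j` the falling factorial, on which the scaffold operators
act approximately as partial derivatives. -/
noncomputable def scaffoldMonomial (x₁ X : K) (i j : ℕ) : K := x₁ ^ i * (descPochhammer K j).eval X

lemma hasVal_scaffoldMonomial (hv : IsDiscVal v) (hb₂ : 0 < b₂) (hx₁ : HasVal v x₁ (-(p * b₁)))
    (hX : HasVal v X (-b₂)) (i j : ℕ) :
    HasVal v (scaffoldMonomial x₁ X i j) (-(i * (p * b₁) + j * b₂)) := by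
  rw [neg_add, ← mul_neg (i : ℤ), ← mul_neg (j : ℤ)]
  exact (hx₁.pow hv i).mul hv (hX.descPochhammer_eval hv (neg_lt_zero.2 hb₂) j)

lemma raisesBy_sub_one_of_generators [FiniteDimensional F K] (hv : IsDiscVal v) (hp : p.Prime)
    (hb₁ : ¬ (p : ℤ) ∣ b₁) (hb₂ : 0 < b₂) (hb : (p : ℤ) ^ 2 ∣ b₂ - b₁)
    (hram : HasRamificationIndex (K := K) v₀ v ((p : ℤ) ^ 2))
    (hdeg : Module.finrank F K = p ^ 2) (hx₁ : HasVal v x₁ (-(p * b₁))) (hX : HasVal v X (-b₂))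
    {τ : K ≃ₐ[F] K} {c : ℤ} (hc : 0 ≤ c) (hτ₁ : τ x₁ - x₁ ∈ hv.fracIdeal (-(p * b₁) + c))
    (hτ₂ : τ X - X ∈ hv.fracIdeal (-b₂ + c)) :
    hv.RaisesBy c ⇑((τ.toLinearMap : Module.End F K) - 1) := by
  have hval := hasVal_scaffoldMonomial hv hb₂ hx₁ hX
  refine (hasDistinctVal_of_hasVal hp hb₁ hb hval).raisesBy hv hram (by simp [hdeg, sq])
    fun ⟨i, j⟩ => ?_
  have h₁ := hv.add_pow_sub_pow_mem (hx₁.mem hv) hτ₁ (by omega) i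
  have h₂ := hv.descPochhammer_eval_add_sub_mem (hX.mem hv) (by omega) hτ₂ (by omega) j
  have hτx := hv.pow_mem (add_mem (hx₁.mem hv) (hv.fracIdeal_antitone (by omega) hτ₁)) i
  rw [add_sub_cancel] at h₁ h₂ hτx
  have hsplit : ((τ.toLinearMap : Module.End F K) - 1) (scaffoldMonomial x₁ X i j) =
      τ x₁ ^ (i : ℕ) * ((descPochhammer K j).eval (τ X) - (descPochhammer K j).eval X) +
        (τ x₁ ^ (i : ℕ) - x₁ ^ (i : ℕ)) * (descPochhammer K j).eval X := by
    rw [LinearMap.sub_apply, Module.End.one_apply, AlgEquiv.toLinearMap_apply, scaffoldMonomial,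
      map_mul, map_pow, map_descPochhammer_eval]
    ring
  rw [hsplit, (hval i j).2]
  exact add_mem (hv.fracIdeal_antitone (by linarith) (hv.mul_mem hτx h₂))
    (hv.fracIdeal_antitone (by linarith)
      (hv.mul_mem h₁ ((hX.descPochhammer_eval hv (by omega) j).mem hv)))

end GaloisAction

section ScaffoldAction

variable {F K : Type*} [Field F] [Field K] [Algebra F K] {v₀ : F → ℤ} {v : K → ℤ}
  {hv : IsDiscVal v} {p : ℕ} {b₁ b₂ : ℤ} {μ : F} {σ : K ≃ₐ[F] K} {x₁ X : K}

/-- The congruences for the action of `σ` on generators `x₁`, `X` from which the scaffold operators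
are built: `σ` translates `x₁` by `1`, its power `σ ^ p` fixes `x₁` and translates `X` by `1`, and
`σ` itself translates `X` by `-μ`, all up to terms of higher valuation. -/
structure IsScaffoldAction (hv : IsDiscVal v) (p : ℕ) (b₁ b₂ : ℤ) (μ : F) (σ : K ≃ₐ[F] K)
    (x₁ X : K) : Prop where
  hasVal₁ : HasVal v x₁ (-(p * b₁))
  hasVal₂ : HasVal v X (-b₂)
  map_sub₁ : σ x₁ - x₁ - 1 ∈ hv.fracIdeal 1
  map_sub₂ : σ X + algebraMap F K μ - X ∈ hv.fracIdeal (p * b₁ + 1 - b₂)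
  pow_map₁ : (σ ^ p) x₁ = x₁
  pow_map_sub₂ : (σ ^ p) X - X - 1 ∈ hv.fracIdeal ((p - 1) * b₁ + 1)
  raisesBy : hv.RaisesBy 0 σ
  raisesBy_pow : hv.RaisesBy b₂ ⇑(((σ ^ p).toLinearMap : Module.End F K) - 1)

/-- The scaffold operator `Ψ₂ = σ ^ p - 1`. -/
def scaffoldOp₂ (p : ℕ) (σ : K ≃ₐ[F] K) : Module.End F K := (σ ^ p).toLinearMap - 1

/-- The scaffold operator `Ψ₁ = σ (σ ^ p) ^ [μ] - 1`, where the exponent `[μ]` stands for the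
truncated power, which corrects the translation of `X` by `-μ`. -/
def scaffoldOp₁ (p : ℕ) (σ : K ≃ₐ[F] K) (μ : F) : Module.End F K :=
  σ.toLinearMap * truncatedPow p (scaffoldOp₂ p σ) μ - 1

namespace IsScaffoldAction

lemma scaffoldOp₂_pow_mul (h : IsScaffoldAction hv p b₁ b₂ μ σ x₁ X) (i : ℕ) (z : K) :
    scaffoldOp₂ p σ (x₁ ^ i * z) = x₁ ^ i * scaffoldOp₂ p σ z := by
  simp only [scaffoldOp₂, LinearMap.sub_apply, Module.End.one_apply, AlgEquiv.toLinearMap_apply,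
    map_mul, map_pow, h.pow_map₁, mul_sub]

lemma truncatedPow_pow_mul (h : IsScaffoldAction hv p b₁ b₂ μ σ x₁ X) (i : ℕ) (z : K) :
    truncatedPow p (scaffoldOp₂ p σ) μ (x₁ ^ i * z) =
      x₁ ^ i * truncatedPow p (scaffoldOp₂ p σ) μ z := by
  have hcomm : Commute (scaffoldOp₂ p σ) (LinearMap.mulLeft F (x₁ ^ i)) :=
    LinearMap.ext (h.scaffoldOp₂_pow_mul i)
  exact LinearMap.congr_fun (commute_truncatedPow hcomm μ) z

lemma scaffoldOp₂_descPochhammer_sub_mem (h : IsScaffoldAction hv p b₁ b₂ μ σ x₁ X)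
    (hp : p.Prime) (hb₁ : 0 < b₁) (hb₂ : 0 < b₂) (j : ℕ) :
    scaffoldOp₂ p σ ((descPochhammer K j).eval X) - j • (descPochhammer K (j - 1)).eval X ∈
      hv.fracIdeal (-(j * b₂) + b₂ + ((p - 1) * b₁ + 1)) := by
  have hp1 : (1 : ℤ) ≤ p := by exact_mod_cast hp.one_le
  have := hv.descPochhammer_eval_sub_sub_mem (h.hasVal₂.mem hv) (by omega) h.pow_map_sub₂
    (by nlinarith) j
  rw [scaffoldOp₂, LinearMap.sub_apply, Module.End.one_apply, AlgEquiv.toLinearMap_apply,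
    map_descPochhammer_eval]
  exact hv.fracIdeal_antitone (by linarith) this

lemma scaffoldOp₂_scaffoldMonomial_sub_mem (h : IsScaffoldAction hv p b₁ b₂ μ σ x₁ X)
    (hp : p.Prime) (hb₁ : 0 < b₁) (hb₂ : 0 < b₂) (i j : ℕ) :
    scaffoldOp₂ p σ (scaffoldMonomial x₁ X i j) - j • scaffoldMonomial x₁ X i (j - 1) ∈
      hv.fracIdeal (-(i * (p * b₁) + j * b₂) + b₂ + 1) := by
  have hp1 : (1 : ℤ) ≤ p := by exact_mod_cast hp.one_le
  rw [scaffoldMonomial, scaffoldMonomial, h.scaffoldOp₂_pow_mul, ← mul_smul_comm, ← mul_sub]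
  refine hv.fracIdeal_antitone ?_ (hv.mul_mem (hv.pow_mem (h.hasVal₁.mem hv) i)
    (h.scaffoldOp₂_descPochhammer_sub_mem hp hb₁ hb₂ j))
  nlinarith

-- The truncated power replaces `X` by `X + μ`, which `σ` sends back to `X` up to higher terms.
lemma scaffoldOp₁_scaffoldMonomial_sub_mem (h : IsScaffoldAction hv p b₁ b₂ μ σ x₁ X)
    (hp : p.Prime) (hpv : (p : K) ∈ hv.fracIdeal 1) (hb₁ : 0 < b₁) (hb₁₂ : b₁ ≤ b₂)
    (hμ : algebraMap F K μ ∈ hv.fracIdeal (b₁ - b₂)) (i : ℕ) {j : ℕ} (hj : j < p) :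
    scaffoldOp₁ p σ μ (scaffoldMonomial x₁ X i j) - i • scaffoldMonomial x₁ X (i - 1) j ∈
      hv.fracIdeal (-(i * (p * b₁) + j * b₂) + p * b₁ + 1) := by
  have hp2 : (2 : ℤ) ≤ p := by exact_mod_cast hp.two_le
  have hpb : 0 < p * b₁ := by positivity
  set M := algebraMap F K μ with hM
  have htrunc := truncatedPow_descPochhammer_sub_mem hp hpv (Y := scaffoldOp₂ p σ) h.raisesBy_pow
    hμ hb₁.le hb₁₂ hj
    fun k _ => h.scaffoldOp₂_descPochhammer_sub_mem hp hb₁ (by omega) k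
  have hX := hv.descPochhammer_eval_add_sub_mem (h.hasVal₂.mem hv) (by omega) h.map_sub₂
    (by omega) j
  rw [add_sub_cancel] at hX
  have hx := hv.pow_sub_sub_mem (h.hasVal₁.mem hv) (by omega) h.map_sub₁ i
  have hx₁ := h.hasVal₁.mem hv
  have hσx := h.raisesBy hx₁
  have hdX := (h.hasVal₂.descPochhammer_eval hv (by omega) j).mem hv
  set D := descPochhammer K j
  have hsplit : scaffoldOp₁ p σ μ (scaffoldMonomial x₁ X i j) -
      i • scaffoldMonomial x₁ X (i - 1) j =
      σ (x₁ ^ i * (truncatedPow p (scaffoldOp₂ p σ) μ (D.eval X) - D.eval (X + M))) +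
        σ x₁ ^ i * (D.eval (σ X + M) - D.eval X) +
        (σ x₁ ^ i - x₁ ^ i - i • x₁ ^ (i - 1)) * D.eval X := by
    simp only [scaffoldOp₁, scaffoldMonomial, LinearMap.sub_apply, Module.End.one_apply,
      Module.End.mul_apply, AlgEquiv.toLinearMap_apply, h.truncatedPow_pow_mul, mul_sub, map_sub,
      map_mul, map_pow, map_descPochhammer_eval, map_add, hM, AlgEquiv.commutes, nsmul_eq_mul, D]
    ring
  rw [hsplit]
  refine add_mem (add_mem (hv.fracIdeal_antitone ?_ (h.raisesBy
    (hv.mul_mem (hv.pow_mem hx₁ i) htrunc))) (hv.fracIdeal_antitone ?_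
    (hv.mul_mem (hv.pow_mem hσx i) hX))) (hv.fracIdeal_antitone ?_ (hv.mul_mem hx hdX))
  all_goals linarith

theorem isScaffold [FiniteDimensional F K] (h : IsScaffoldAction hv p b₁ b₂ μ σ x₁ X)
    (hp : p.Prime) (hpv : (p : K) ∈ hv.fracIdeal 1) (hb₁ : 0 < b₁) (hb₁₂ : b₁ ≤ b₂)
    (hb₁p : ¬ (p : ℤ) ∣ b₁) (hb : (p : ℤ) ^ 2 ∣ b₂ - b₁)
    (hram : HasRamificationIndex (K := K) v₀ v ((p : ℤ) ^ 2))
    (hdeg : Module.finrank F K = p ^ 2) (hμ : algebraMap F K μ ∈ hv.fracIdeal (b₁ - b₂)) :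
    IsScaffold hv p b₁ b₂ (scaffoldMonomial x₁ X) (scaffoldOp₁ p σ μ) (scaffoldOp₂ p σ) where
  hasVal := hasVal_scaffoldMonomial hv (by omega) h.hasVal₁ h.hasVal₂
  raisesBy₁ := by
    have hval := hasVal_scaffoldMonomial hv (by omega) h.hasVal₁ h.hasVal₂
    refine (hasDistinctVal_of_hasVal hp hb₁p hb hval).raisesBy hv hram (by simp [hdeg, sq])
      fun ⟨i, j⟩ => ?_
    have hderiv := h.scaffoldOp₁_scaffoldMonomial_sub_mem hp hpv hb₁ hb₁₂ hμ i j.2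
    rw [(hval i j).2, ← sub_add_cancel (scaffoldOp₁ p σ μ _)]
    refine add_mem (hv.fracIdeal_antitone (by omega) hderiv) ?_
    rcases (i : ℕ) with _ | i
    · simp
    · refine nsmul_mem (hv.fracIdeal_antitone ?_ ((hval i j).mem hv)) _
      push_cast
      linarith
  raisesBy₂ := h.raisesBy_pow
  deriv₁ i j _ hj := h.scaffoldOp₁_scaffoldMonomial_sub_mem hp hpv hb₁ hb₁₂ hμ i hj
  deriv₂ i j _ _ := h.scaffoldOp₂_scaffoldMonomial_sub_mem hp hb₁ (by omega) i j

end IsScaffoldAction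

end ScaffoldAction

section WittExtension

variable {F K : Type*} [Field F] [Field K] [Algebra F K] {v₀ : F → ℤ} {v : K → ℤ}
  {hv : IsDiscVal v} {p : ℕ} {b₁ b₂ E : ℤ} {μ : F} {σ : K ≃ₐ[F] K} {x₁ x₂ ε δ : K}

lemma ramification_break_bounds {p b E : ℤ} (hp : 2 ≤ p) (hb : 0 < b)
    (hbE : p * (p ^ 2 - 1) * b < E) :
    b ≤ (p - 1) * b ∧ p * b ≤ p * (p - 1) * b ∧ 2 * (p * (p - 1) * b) < E := by
  have h₁ : 0 ≤ (p - 2) * b := mul_nonneg (by omega) hb.le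
  have h₂ : 0 ≤ p * ((p - 2) * b) := mul_nonneg (by omega) h₁
  have h₃ : 0 ≤ (p - 1) * (p * (p * b) - p * b) := by
    rw [show (p - 1) * (p * (p * b) - p * b) = (p - 1) ^ 2 * (p * b) by ring]
    positivity
  exact ⟨by linarith, by linarith, by linarith⟩

lemma sum_pow_apply_sub (τ : Module.End F K) (n : ℕ) (z : K) :
    (∑ j ∈ Finset.range n, τ ^ j) (τ z - z) = (τ ^ n) z - z :=
  LinearMap.congr_fun (geom_sum_mul τ n) z

lemma IsDiscVal.RaisesBy.pow_apply_sub_sub_mem (hp : p.Prime) {b : ℤ}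
    (hσ : hv.RaisesBy b ⇑((σ.toLinearMap : Module.End F K) - 1)) (hb : 0 ≤ b)
    (hpb : (p : K) ∈ hv.fracIdeal ((p - 1) * b)) {c : F} {z : K} {n : ℤ}
    (hz : σ z - z - algebraMap F K c ∈ hv.fracIdeal n) :
    (σ ^ p) z - z - p * algebraMap F K c ∈ hv.fracIdeal (n + (p - 1) * b) := by
  have hsum := hσ.geom_sum hp hb hpb hz
  rw [map_sub, ← AlgEquiv.toLinearMap_apply, sum_pow_apply_sub, ← AlgEquiv.pow_toLinearMap] at hsum
  have hfix : (∑ j ∈ Finset.range p, σ.toLinearMap ^ j) (algebraMap F K c) =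
      p * algebraMap F K c := by
    simp only [LinearMap.sum_apply, ← AlgEquiv.pow_toLinearMap, AlgEquiv.toLinearMap_apply,
      AlgEquiv.commutes, Finset.sum_const, Finset.card_range, nsmul_eq_mul]
  rwa [hfix] at hsum

lemma pow_apply_eq_self (hp : p.Prime) (hp0 : (p : K) ≠ 0) (hE : (p : K) ∈ hv.fracIdeal E)
    (hb₁ : 0 < b₁) (hbE : p * ((p : ℤ) ^ 2 - 1) * b₁ < E)
    (hσ : hv.RaisesBy b₁ ⇑((σ.toLinearMap : Module.End F K) - 1))
    (hx₁ : x₁ ∈ hv.fracIdeal (-(p * b₁))) {a : F} (h₁ : x₁ ^ p - x₁ = algebraMap F K a)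
    (hσ₁ : σ x₁ - x₁ - 1 ∈ hv.fracIdeal 1) : (σ ^ p) x₁ = x₁ := by
  have hp2 : (2 : ℤ) ≤ p := by exact_mod_cast hp.two_le
  obtain ⟨hb_le, hpb_le, hE_lt⟩ := ramification_break_bounds hp2 hb₁ hbE
  have hpb : 0 ≤ (p : ℤ) * b₁ := by positivity
  refine hv.eq_of_pow_sub_self_eq hp hp0 hE hpb (by linarith) hx₁ ?_ ?_
  · rw [← map_pow, ← map_sub, h₁, AlgEquiv.commutes]
  · have hpow := hσ.pow_apply_sub_sub_mem hp hb₁.le (hv.fracIdeal_antitone (by linarith) hE)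
      (c := 1) (by simpa using hσ₁)
    rw [map_one, mul_one] at hpow
    simpa using add_mem (hv.fracIdeal_antitone (by omega) hpow)
      (hv.fracIdeal_antitone (by linarith) hE)

-- `σ` translates `x₂ + x₁ ^ p / p` by `1 / p` up to an integral error, so `σ ^ p` translates it
-- by `1`.
lemma pow_apply_sub_sub_one_mem (hp : p.Prime) (hE : HasVal v (p : K) E) (hb₁ : 0 < b₁)
    (hbE : p * ((p : ℤ) ^ 2 - 1) * b₁ < E)
    (hσ : hv.RaisesBy b₁ ⇑((σ.toLinearMap : Module.End F K) - 1))
    (hx₁ : x₁ ∈ hv.fracIdeal (-(p * b₁))) (hfix : (σ ^ p) x₁ = x₁)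
    (hε : ε ∈ hv.fracIdeal (E - p * (p - 1) * b₁)) (hδ : δ ∈ hv.fracIdeal 1)
    (hσ₁ : σ x₁ = x₁ + 1 + ε) (hσ₂ : σ x₂ = x₂ + wittD p x₁ 1 + δ) :
    (σ ^ p) x₂ - x₂ - 1 ∈ hv.fracIdeal ((p - 1) * b₁ + 1) := by
  have hp2 : (2 : ℤ) ≤ p := by exact_mod_cast hp.two_le
  have heq : σ (x₂ + x₁ ^ p / p) - (x₂ + x₁ ^ p / p) - algebraMap F K (1 / p) =
      ε ^ p / p - wittD p (x₁ + 1) ε + δ := by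
    have hD := add_pow_eq_sub_mul_wittD hE.1 (x₁ + 1) ε
    have hD₁ := add_pow_eq_sub_mul_wittD hE.1 x₁ 1
    simp only [map_add, map_div₀, map_pow, map_natCast, map_one, hσ₁, hσ₂]
    have hp0 := hE.1
    field_simp
    linear_combination hD + hD₁
  obtain ⟨hb_le, hpb_le, hE_lt⟩ := ramification_break_bounds hp2 hb₁ hbE
  have hEb : 0 < ((p : ℤ) - 1) * (E - p * (p - 1) * b₁ - p * b₁) :=
    mul_pos (by omega) (by linarith)
  have herr : ε ^ p / p - wittD p (x₁ + 1) ε + δ ∈ hv.fracIdeal 1 := by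
    refine add_mem (sub_mem (hv.fracIdeal_antitone ?_ (hv.div_mem (hv.pow_mem hε p) hE.1))
      (hv.wittD_mem hp (add_mem hx₁ (hv.fracIdeal_antitone ?_ hv.one_mem)) hε ?_ ?_)) hδ
    all_goals linarith [hE.2]
  have hpow := hσ.pow_apply_sub_sub_mem hp hb₁.le
    (hv.fracIdeal_antitone (by linarith) (hE.mem hv)) (heq ▸ herr)
  rw [add_comm (1 : ℤ)] at hpow
  convert hpow using 1
  simp only [map_add, map_div₀, map_pow, map_natCast, hfix, map_one]
  rw [mul_one_div_cancel hE.1]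
  ring

lemma generator_map_add_sub_mem (hp : p.Prime) (hb₁ : 0 < b₁)
    (hbE : p * ((p : ℤ) ^ 2 - 1) * b₁ < E) (hb₂ : (p : ℤ) ^ 2 * b₁ < b₂)
    (hx₁ : x₁ ∈ hv.fracIdeal (-(p * b₁))) (hμ : algebraMap F K μ ∈ hv.fracIdeal (b₁ - b₂))
    (hε : ε ∈ hv.fracIdeal (E - p * (p - 1) * b₁)) (hδ : δ ∈ hv.fracIdeal 1)
    (hσ₁ : σ x₁ = x₁ + 1 + ε) (hσ₂ : σ x₂ = x₂ + wittD p x₁ 1 + δ) :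
    σ (x₂ - algebraMap F K μ * x₁) + algebraMap F K μ - (x₂ - algebraMap F K μ * x₁) ∈
      hv.fracIdeal (p * b₁ + 1 - b₂) := by
  have hp2 : (2 : ℤ) ≤ p := by exact_mod_cast hp.two_le
  obtain ⟨hb_le, hpb_le, hE_lt⟩ := ramification_break_bounds hp2 hb₁ hbE
  have heq : σ (x₂ - algebraMap F K μ * x₁) + algebraMap F K μ - (x₂ - algebraMap F K μ * x₁) =
      wittD p x₁ 1 + δ - algebraMap F K μ * ε := by
    rw [map_sub, map_mul, AlgEquiv.commutes, hσ₁, hσ₂]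
    ring
  rw [heq]
  refine sub_mem (add_mem (hv.wittD_mem hp hx₁ hv.one_mem ?_ ?_)
    (hv.fracIdeal_antitone ?_ hδ)) (hv.fracIdeal_antitone ?_ (hv.mul_mem hμ hε))
  all_goals nlinarith

theorem isScaffoldAction_of_wittExtension [FiniteDimensional F K] (hp : p.Prime)
    (hE : HasVal v (p : K) E) (hb₁ : 0 < b₁) (hb₁p : ¬ (p : ℤ) ∣ b₁)
    (hbE : p * ((p : ℤ) ^ 2 - 1) * b₁ < E) (hb₂ : (p : ℤ) ^ 2 * b₁ < b₂)
    (hb : (p : ℤ) ^ 2 ∣ b₂ - b₁) (hram : HasRamificationIndex (K := K) v₀ v ((p : ℤ) ^ 2))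
    (hdeg : Module.finrank F K = p ^ 2) {a : F}
    (ha : HasVal v (algebraMap F K a) (-((p : ℤ) ^ 2 * b₁)))
    (hμ : HasVal v (algebraMap F K μ) (b₁ - b₂)) (h₁ : x₁ ^ p - x₁ = algebraMap F K a)
    (h₂ : x₂ ^ p - x₂ = algebraMap F K μ ^ p * algebraMap F K a + wittD p x₁ (algebraMap F K a))
    (hε : ε ∈ hv.fracIdeal (E - p * (p - 1) * b₁)) (hδ : δ ∈ hv.fracIdeal 1)
    (hσ₁ : σ x₁ = x₁ + 1 + ε) (hσ₂ : σ x₂ = x₂ + wittD p x₁ 1 + δ) :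
    IsScaffoldAction hv p b₁ b₂ μ σ x₁ (x₂ - algebraMap F K μ * x₁) := by
  have hp2 : (2 : ℤ) ≤ p := by exact_mod_cast hp.two_le
  have hx₁ : HasVal v x₁ (-(p * b₁)) :=
    hv.hasVal_of_hasVal_pow_sub_self hp.two_le (by nlinarith) (by rw [h₁]; convert ha using 1; ring)
  have hX : HasVal v (x₂ - algebraMap F K μ * x₁) (-b₂) := by
    convert hv.hasVal_reduced_generator hp hE.1 (hE.mem hv) hb₁ hbE (c := b₂ - b₁) (by linarith) hx₁
      (by convert hμ using 1; ring) (ha.mem hv) h₁ h₂ using 1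
    ring
  have hM := hμ.mem hv
  obtain ⟨hb_le, hpb_le, hE_lt⟩ := ramification_break_bounds hp2 hb₁ hbE
  have hσx : σ x₁ - x₁ - 1 ∈ hv.fracIdeal 1 := by
    have heq : σ x₁ - x₁ - 1 = ε := by rw [hσ₁]; ring
    rw [heq]
    exact hv.fracIdeal_antitone (by nlinarith) hε
  have hσX := generator_map_add_sub_mem hp hb₁ hbE hb₂ (hx₁.mem hv) hM hε hδ hσ₁ hσ₂
  set M := algebraMap F K μ with hMdef
  have hσ : hv.RaisesBy b₁ ⇑((σ.toLinearMap : Module.End F K) - 1) := by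
    refine raisesBy_sub_one_of_generators hv hp hb₁p (by nlinarith) hb hram hdeg hx₁ hX hb₁.le ?_ ?_
    · have := add_mem (hv.fracIdeal_antitone zero_le_one hσx) hv.one_mem
      rw [sub_add_cancel] at this
      exact hv.fracIdeal_antitone (by nlinarith) this
    · have := sub_mem (hv.fracIdeal_antitone (by nlinarith) hσX) hM
      rw [add_sub_right_comm, add_sub_cancel_right] at this
      exact hv.fracIdeal_antitone (by nlinarith) this
  have hfix := pow_apply_eq_self hp hE.1 (hE.mem hv) hb₁ hbE hσ (hx₁.mem hv) h₁ hσx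
  have hσpX : (σ ^ p) (x₂ - M * x₁) - (x₂ - M * x₁) - 1 ∈ hv.fracIdeal ((p - 1) * b₁ + 1) := by
    have := pow_apply_sub_sub_one_mem hp hE hb₁ hbE hσ (hx₁.mem hv) hfix hε hδ hσ₁ hσ₂
    rwa [map_sub, map_mul, hfix, hMdef, AlgEquiv.commutes, sub_sub_sub_cancel_right]
  refine ⟨hx₁, hX, hσx, hσX, hfix, hσpX, hσ.of_sub_one hb₁.le,
    raisesBy_sub_one_of_generators hv hp hb₁p (by nlinarith) hb hram hdeg hx₁ hX
      (by nlinarith) ?_ ?_⟩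
  · rw [hfix, sub_self]
    exact zero_mem _
  · have := add_mem (hv.fracIdeal_antitone (by nlinarith) hσpX) hv.one_mem
    rwa [sub_add_cancel, ← neg_add_cancel b₂] at this

theorem isScaffold_of_wittExtension [FiniteDimensional F K] (hv : IsDiscVal v) (hp : p.Prime)
    (hp0 : (p : F) ≠ 0) (hram : HasRamificationIndex (K := K) v₀ v ((p : ℤ) ^ 2))
    (hdeg : Module.finrank F K = p ^ 2) {a : F} (ha : HasVal v₀ a (-b₁)) (hb₁ : 0 < b₁)
    (hb₁p : ¬ (p : ℤ) ∣ b₁) (hb₁e : ((p : ℤ) ^ 2 - 1) * b₁ < p * v₀ (p : F))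
    {m : ℤ} (hμ : HasVal v₀ μ (-m)) (hb₂ : b₂ = (p : ℤ) ^ 2 * m + b₁)
    (hb₁₂ : (p : ℤ) ^ 2 * b₁ < b₂) (h₁ : x₁ ^ p - x₁ = algebraMap F K a)
    (h₂ : x₂ ^ p - x₂ = algebraMap F K μ ^ p * algebraMap F K a + wittD p x₁ (algebraMap F K a))
    (hε : ε ∈ hv.fracIdeal ((p : ℤ) ^ 2 * v₀ (p : F) - p * (p - 1) * b₁))
    (hδ : δ ∈ hv.fracIdeal 1) (hσ₁ : σ x₁ = x₁ + 1 + ε) (hσ₂ : σ x₂ = x₂ + wittD p x₁ 1 + δ) :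
    IsScaffold hv p b₁ b₂ (scaffoldMonomial x₁ (x₂ - algebraMap F K μ * x₁))
      (scaffoldOp₁ p σ μ) (scaffoldOp₂ p σ) := by
  have hp2 : (2 : ℤ) ≤ p := by exact_mod_cast hp.two_le
  have hE : HasVal v (p : K) ((p : ℤ) ^ 2 * v₀ (p : F)) := by simpa using hram.hasVal hp0
  have hpsq : 0 ≤ ((p : ℤ) ^ 2 - 1) * b₁ := mul_nonneg (by nlinarith) hb₁.le
  have hbE : p * ((p : ℤ) ^ 2 - 1) * b₁ < (p : ℤ) ^ 2 * v₀ (p : F) := by nlinarith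
  have hE1 := hram.natCast_mem_fracIdeal_one hv (by positivity) (k := p) (by nlinarith)
  have hb : (p : ℤ) ^ 2 ∣ b₂ - b₁ := ⟨m, by rw [hb₂]; ring⟩
  have hM : HasVal v (algebraMap F K μ) (b₁ - b₂) := by
    convert hram.hasVal hμ.1 using 1
    rw [hμ.2, hb₂]
    ring
  have hA : HasVal v (algebraMap F K a) (-((p : ℤ) ^ 2 * b₁)) := by
    simpa [ha.2] using hram.hasVal ha.1
  exact (isScaffoldAction_of_wittExtension hp hE hb₁ hb₁p hbE hb₁₂ hb hram hdeg hA hM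
    h₁ h₂ hε hδ hσ₁ hσ₂).isScaffold hp hE1 hb₁ (by linarith) hb₁p hb hram hdeg (hM.mem hv)

end WittExtension

section GroupAlgebra

variable {F K : Type*} [Field F] [Field K] [Algebra F K]

/-- The image of the group algebra `F[Gal(K/F)]` in the algebra of `F`-linear endomorphisms of
`K`. -/
def galoisAlgebra (F K : Type*) [Field F] [Field K] [Algebra F K] :
    Subalgebra F (Module.End F K) :=
  Submodule.toSubalgebra
    (Submodule.span F {f | ∃ σ : K ≃ₐ[F] K, f = (σ.toLinearMap : Module.End F K)})
    (Submodule.subset_span ⟨1, rfl⟩) fun f g hf hg => by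
      have hfg := Submodule.mul_mem_mul hf hg
      rw [Submodule.span_mul_span] at hfg
      refine Submodule.span_mono ?_ hfg
      rintro _ ⟨_, ⟨σ, rfl⟩, _, ⟨τ, rfl⟩, rfl⟩
      exact ⟨σ * τ, rfl⟩

lemma toSubmodule_galoisAlgebra : Subalgebra.toSubmodule (galoisAlgebra F K) =
    Submodule.span F {f | ∃ σ : K ≃ₐ[F] K, f = (σ.toLinearMap : Module.End F K)} :=
  Submodule.toSubalgebra_toSubmodule _ _ _

lemma toLinearMap_mem_galoisAlgebra (σ : K ≃ₐ[F] K) :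
    (σ.toLinearMap : Module.End F K) ∈ galoisAlgebra F K :=
  Submodule.subset_span ⟨σ, rfl⟩

lemma scaffoldOp₂_mem_galoisAlgebra (p : ℕ) (σ : K ≃ₐ[F] K) :
    scaffoldOp₂ p σ ∈ galoisAlgebra F K :=
  sub_mem (toLinearMap_mem_galoisAlgebra _) (one_mem _)

lemma scaffoldOp₁_mem_galoisAlgebra (p : ℕ) (σ : K ≃ₐ[F] K) (μ : F) :
    scaffoldOp₁ p σ μ ∈ galoisAlgebra F K :=
  sub_mem (mul_mem (toLinearMap_mem_galoisAlgebra _) (sum_mem fun i _ =>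
    Subalgebra.smul_mem _ (pow_mem (scaffoldOp₂_mem_galoisAlgebra p σ) i) _)) (one_mem _)

lemma finrank_galoisAlgebra_le [FiniteDimensional F K] [IsGalois F K] :
    Module.finrank F (Subalgebra.toSubmodule (galoisAlgebra F K)) ≤ Module.finrank F K := by
  have hset : {f : Module.End F K | ∃ σ : K ≃ₐ[F] K, f = (σ.toLinearMap : Module.End F K)} =
      Set.range fun σ : K ≃ₐ[F] K => (σ.toLinearMap : Module.End F K) :=
    Set.ext fun f => exists_congr fun σ => eq_comm
  rw [toSubmodule_galoisAlgebra, hset, ← IsGalois.card_aut_eq_finrank F K,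
    Nat.card_eq_fintype_card]
  exact finrank_range_le_card _

lemma span_conjugates_eq_top_of_span_eq_top {ι : Type*} {Ψ : ι → Module.End F K}
    (hΨ : ∀ i, Ψ i ∈ galoisAlgebra F K) {ρ : K}
    (hspan : Submodule.span F (Set.range fun i => Ψ i ρ) = ⊤) :
    Submodule.span F (Set.range fun σ : K ≃ₐ[F] K => σ ρ) = ⊤ := by
  have hle : Subalgebra.toSubmodule (galoisAlgebra F K) ≤
      (Submodule.span F (Set.range fun σ : K ≃ₐ[F] K => σ ρ)).comap (LinearMap.applyₗ ρ) := by
    rw [toSubmodule_galoisAlgebra, Submodule.span_le]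
    rintro _ ⟨σ, rfl⟩
    exact Submodule.subset_span ⟨σ, rfl⟩
  rw [eq_top_iff, ← hspan, Submodule.span_le]
  rintro _ ⟨i, rfl⟩
  exact hle (hΨ i)

theorem normalBasis_and_basis_galoisAlgebra [FiniteDimensional F K] [IsGalois F K] {ι : Type*}
    [Fintype ι] (hcard : Fintype.card ι = Module.finrank F K) {Ψ : ι → Module.End F K}
    (hΨ : ∀ i, Ψ i ∈ galoisAlgebra F K) {ρ : K} (hli : LinearIndependent F fun i => Ψ i ρ) :
    LinearIndependent F (fun σ : K ≃ₐ[F] K => σ ρ) ∧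
    Submodule.span F (Set.range fun σ : K ≃ₐ[F] K => σ ρ) = ⊤ ∧
    LinearIndependent F Ψ ∧
    Submodule.span F (Set.range Ψ) = Subalgebra.toSubmodule (galoisAlgebra F K) := by
  have hspan := span_conjugates_eq_top_of_span_eq_top hΨ
    (hli.span_eq_top_of_card_eq_finrank' hcard)
  have hG : Fintype.card (K ≃ₐ[F] K) = Module.finrank F K := by
    rw [← Nat.card_eq_fintype_card, IsGalois.card_aut_eq_finrank]
  have hΨli : LinearIndependent F Ψ := LinearIndependent.of_comp (LinearMap.applyₗ ρ) hli
  refine ⟨linearIndependent_of_top_le_span_of_card_eq_finrank hspan.ge hG, hspan, hΨli,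
    Submodule.eq_of_le_of_finrank_le ?_ ?_⟩
  · rw [Submodule.span_le]
    rintro _ ⟨i, rfl⟩
    exact hΨ i
  · rw [finrank_span_eq_card hΨli, hcard]
    exact finrank_galoisAlgebra_le

end GroupAlgebra

section IntegralBasis

variable {F K : Type*} [Field F] [Field K] [Algebra F K] {v₀ : F → ℤ} {v : K → ℤ}
  {hv : IsDiscVal v} {p : ℕ} {b₁ b₂ N : ℤ} {π : F}

/-- The operator `Ψ^{(a)} = Ψ₂ ^ a₁ Ψ₁ ^ a₀` of the paper, for `a = a₀ + p a₁`. -/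
def digitOp {F K : Type*} [Field F] [Field K] [Algebra F K] (p : ℕ) (Ψ₁ Ψ₂ : Module.End F K)
    (a : ℕ) : Module.End F K := Ψ₂ ^ (a / p) * Ψ₁ ^ (a % p)

lemma digitOp_scaffoldOp_mem_galoisAlgebra (p : ℕ) (σ : K ≃ₐ[F] K) (μ : F) (a : ℕ) :
    digitOp p (scaffoldOp₁ p σ μ) (scaffoldOp₂ p σ) a ∈ galoisAlgebra F K :=
  mul_mem (pow_mem (scaffoldOp₂_mem_galoisAlgebra p σ) _)
    (pow_mem (scaffoldOp₁_mem_galoisAlgebra p σ μ) _)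

/-- The integer `𝔟(a) = (1 + a₁) b₂ + a₀ p b₁` of the paper, for `a = a₀ + p a₁`. -/
def digitBreak (p : ℕ) (b₁ b₂ : ℤ) (a : ℕ) : ℤ :=
  (1 + ((a / p : ℕ) : ℤ)) * b₂ + ((a % p : ℕ) : ℤ) * (p : ℤ) * b₁

lemma eq_of_sq_dvd_digitBreak_sub (hp : p.Prime) (hb₁ : ¬ (p : ℤ) ∣ b₁)
    (hb : (p : ℤ) ^ 2 ∣ b₂ - b₁) {a a' : ℕ} (ha : a < p ^ 2) (ha' : a' < p ^ 2)
    (h : (p : ℤ) ^ 2 ∣ digitBreak p b₁ b₂ a - digitBreak p b₁ b₂ a') : a = a' := by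
  rw [sq] at ha ha'
  obtain ⟨hmod, hdiv⟩ := digits_eq_of_sq_dvd hp hb₁ hb (Nat.mod_lt a hp.pos)
    (Nat.div_lt_of_lt_mul ha) (Nat.mod_lt a' hp.pos) (Nat.div_lt_of_lt_mul ha')
    (by convert h using 1; rw [digitBreak, digitBreak]; ring)
  rw [← Nat.div_add_mod a p, hdiv, hmod, Nat.div_add_mod]

lemma IsScaffold.hasVal_digitOp_apply [FiniteDimensional F K] {g : ℕ → ℕ → K}
    {Ψ₁ Ψ₂ : Module.End F K} (h : IsScaffold hv p b₁ b₂ g Ψ₁ Ψ₂) (hp : p.Prime)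
    (hp1 : (p : K) ∈ hv.fracIdeal 1) (hb₁ : ¬ (p : ℤ) ∣ b₁) (hb : (p : ℤ) ^ 2 ∣ b₂ - b₁)
    (hram : HasRamificationIndex (K := K) v₀ v ((p : ℤ) ^ 2))
    (hdeg : Module.finrank F K = p ^ 2) {ρ : K} (hρ : HasVal v ρ b₂) {a : ℕ} (ha : a < p ^ 2) :
    HasVal v (digitOp p Ψ₁ Ψ₂ a ρ) (digitBreak p b₁ b₂ a) := by
  rw [sq] at ha
  have hbreak : digitBreak p b₁ b₂ a = b₂ + (a % p : ℕ) * (p * b₁) + (a / p : ℕ) * b₂ := by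
    rw [digitBreak]
    ring
  rw [hbreak]
  exact h.hasVal_pow_apply hp hp1 hb₁ hb hram hdeg hρ (by simp) (Nat.mod_lt a hp.pos)
    (Nat.div_lt_of_lt_mul ha)

namespace HasRamificationIndex

lemma hasVal_zpow_mul (hram : HasRamificationIndex (K := K) v₀ v N) (hv₀ : IsDiscVal v₀)
    (hv : IsDiscVal v) (hπ : HasVal v₀ π 1) {y : K} {b : ℤ} (hy : HasVal v y b) (k : ℤ) :
    HasVal v (algebraMap F K (π ^ k) * y) (N * k + b) := by
  convert (hram.hasVal (zpow_ne_zero k hπ.1)).mul hv hy using 1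
  rw [hv₀.map_zpow hπ.1, hπ.2, mul_one]

lemma hasVal_zpow_neg_ediv_mul (hram : HasRamificationIndex (K := K) v₀ v N)
    (hv₀ : IsDiscVal v₀) (hv : IsDiscVal v) (hπ : HasVal v₀ π 1) {y : K} {b : ℤ}
    (hy : HasVal v y b) : HasVal v (algebraMap F K (π ^ (-(b / N))) * y) (b % N) := by
  convert hram.hasVal_zpow_mul hv₀ hv hπ hy (-(b / N)) using 1
  rw [Int.emod_def]
  ring

lemma hasVal_zpow_ediv_mul (hram : HasRamificationIndex (K := K) v₀ v N) (hv₀ : IsDiscVal v₀)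
    (hv : IsDiscVal v) (hπ : HasVal v₀ π 1) {y : K} {b : ℤ} (hy : HasVal v y (b % N)) :
    HasVal v (algebraMap F K (π ^ (b / N)) * y) b := by
  convert hram.hasVal_zpow_mul hv₀ hv hπ hy (b / N) using 1
  rw [Int.mul_ediv_add_emod]

end HasRamificationIndex

lemma hasDistinctVal_of_hasVal_emod {ι : Type*} {f : ι → K} {b : ι → ℤ}
    (hf : ∀ i, HasVal v (f i) (b i % N)) (hb : ∀ i j, N ∣ b i - b j → i = j) :
    HasDistinctVal v N f where
  ne_zero i := (hf i).1
  eq_of_dvd i j h := hb i j <| by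
    rw [(hf i).2, (hf j).2] at h
    exact Int.dvd_of_emod_eq_zero <| by
      rw [Int.sub_emod]
      exact Int.emod_eq_zero_of_dvd h

lemma hasDistinctVal_of_hasVal_digitBreak_emod (hp : p.Prime) (hb₁ : ¬ (p : ℤ) ∣ b₁)
    (hb : (p : ℤ) ^ 2 ∣ b₂ - b₁) {f : Fin (p ^ 2) → K}
    (hf : ∀ a : Fin (p ^ 2), HasVal v (f a) (digitBreak p b₁ b₂ a % (p : ℤ) ^ 2)) :
    HasDistinctVal v ((p : ℤ) ^ 2) f :=
  hasDistinctVal_of_hasVal_emod hf fun a a' h =>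
    Fin.ext (eq_of_sq_dvd_digitBreak_sub hp hb₁ hb a.2 a'.2 h)

lemma linearIndependent_of_zpow_mul {ι : Type*} (hπ : π ≠ 0) (d : ι → ℤ) {y : ι → K}
    (h : LinearIndependent F fun i => algebraMap F K (π ^ (-d i)) * y i) :
    LinearIndependent F y := by
  convert h.units_smul fun i => Units.mk0 π hπ ^ d i using 1
  funext i
  rw [Pi.smul_apply', Units.smul_def, Units.val_zpow_eq_zpow_val, Units.val_mk0, Algebra.smul_def,
    ← mul_assoc, ← map_mul, ← zpow_add₀ hπ, add_neg_cancel, zpow_zero, map_one, one_mul]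

end IntegralBasis

theorem statement13_general
    {p : ℕ} (hp : p.Prime)
    {K0 K2 : Type*} [Field K0] [Field K2] [CharZero K0]
    [Algebra K0 K2] [IsGalois K0 K2] [FiniteDimensional K0 K2]
    (hdeg : Module.finrank K0 K2 = p ^ 2)
    {v0 : K0 → ℤ} {v2 : K2 → ℤ} (hv0 : IsDiscVal v0) (hv2 : IsDiscVal v2)
    (hram : HasRamificationIndex (K := K2) v0 v2 ((p : ℤ) ^ 2))
    {e0 : ℤ} (he0 : e0 = v0 (p : K0))
    {a1 μ a2 : K0} (ha1 : a1 ≠ 0) (hμ0 : μ ≠ 0)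
    (hnd : ¬ ((p : ℤ) ∣ v0 a1)) (hneg : v0 a1 < 0)
    (hbd : -((p : ℤ) * e0) < ((p : ℤ) ^ 2 - 1) * v0 a1)
    {m : ℤ} (hm : m = -v0 μ)
    (hmu2 : -(((p : ℤ) ^ 2 - 1) * v0 a1) < (p : ℤ) ^ 2 * m)
    (ha2 : a2 = μ ^ p * a1)
    {x1 x2 : K2}
    (hx1 : x1 ^ p - x1 = algebraMap K0 K2 a1)
    (hx2 : x2 ^ p - x2 = algebraMap K0 K2 a2 + wittD p x1 (algebraMap K0 K2 a1))
    {b1 b2 : ℤ} (hb1 : b1 = -v0 a1) (hb2 : b2 = (p : ℤ) ^ 2 * m + b1)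
    {σ : K2 ≃ₐ[K0] K2} {ε δ : K2}
    (hσx1 : σ x1 = x1 + 1 + ε)
    (hε : ε ∈ hv2.fracIdeal ((p : ℤ) ^ 2 * e0 - p * (p - 1) * b1))
    (hσx2 : σ x2 = x2 + wittD p x1 1 + δ)
    (hδ : δ ∈ hv2.fracIdeal 1)
    {π0 : K0} (hπ0 : HasVal v0 π0 1)
    {ρ0 : K2} (hρ0 : HasVal v2 ρ0 (b2 % (p : ℤ) ^ 2))
    {d : ℕ → ℤ} (hd : ∀ a < p ^ 2, d a = Int.fdiv (digitBreak p b1 b2 a) ((p : ℤ) ^ 2))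
    {Ψf : ℕ → Module.End K0 K2}
    (hΨf : ∀ a < p ^ 2, Ψf a = digitOp p (scaffoldOp₁ p σ μ) (scaffoldOp₂ p σ) a)
    {ρ : K2} (hρ : ρ = algebraMap K0 K2 (π0 ^ d 0) * ρ0)
    {ρf : ℕ → K2} (hρf : ∀ a, ρf a = algebraMap K0 K2 (π0 ^ (-d a)) * Ψf a ρ) :
    LinearIndependent K0 (fun a : Fin (p ^ 2) => ρf a) ∧
    (∀ z, z ∈ hv2.fracIdeal 0 ↔
      ∃ c : Fin (p ^ 2) → K0, (∀ i, c i ∈ hv0.fracIdeal 0) ∧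
        z = ∑ i, algebraMap K0 K2 (c i) * ρf i) ∧
    LinearIndependent K0 (fun τ : K2 ≃ₐ[K0] K2 => τ ρ) ∧
    Submodule.span K0 (Set.range (fun τ : K2 ≃ₐ[K0] K2 => τ ρ)) = ⊤ ∧
    LinearIndependent K0 (fun a : Fin (p ^ 2) => Ψf a) ∧
    Submodule.span K0 (Set.range (fun a : Fin (p ^ 2) => Ψf a)) =
      Subalgebra.toSubmodule (galoisAlgebra K0 K2) := by
  subst he0 hm hb1 ha2
  have hpsq : (0 : ℤ) < (p : ℤ) ^ 2 := pow_pos (by exact_mod_cast hp.pos) 2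
  have hb1p : ¬ (p : ℤ) ∣ -v0 a1 := by rwa [dvd_neg]
  have hdvd : (p : ℤ) ^ 2 ∣ b2 - -v0 a1 := ⟨-v0 μ, by rw [hb2]; ring⟩
  have hp1 : (p : K2) ∈ hv2.fracIdeal 1 :=
    hram.natCast_mem_fracIdeal_one hv2 hpsq (by nlinarith)
  have hscaffold := isScaffold_of_wittExtension hv2 hp (Nat.cast_ne_zero.2 hp.ne_zero) hram hdeg
    ⟨ha1, (neg_neg _).symm⟩ (neg_pos.2 hneg) hb1p (by linarith)
    ⟨hμ0, (neg_neg _).symm⟩ hb2 (by linarith) hx1 (by rw [hx2, map_mul, map_pow]) hε hδ hσx1 hσx2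
  have hρ_val : HasVal v2 ρ b2 := by
    have hd0 : d 0 = b2 / (p : ℤ) ^ 2 := by
      simpa [digitBreak, Int.fdiv_eq_ediv_of_nonneg _ hpsq.le] using hd 0 (pow_pos hp.pos 2)
    rw [hρ, hd0]
    exact hram.hasVal_zpow_ediv_mul hv0 hv2 hπ0 hρ0
  have hρf_val (a : Fin (p ^ 2)) :
      HasVal v2 (ρf a) (digitBreak p (-v0 a1) b2 a % (p : ℤ) ^ 2) := by
    rw [hρf, hΨf a a.2, hd a a.2, Int.fdiv_eq_ediv_of_nonneg _ hpsq.le]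
    exact hram.hasVal_zpow_neg_ediv_mul hv0 hv2 hπ0
      (hscaffold.hasVal_digitOp_apply hp hp1 hb1p hdvd hram hdeg hρ_val a.2)
  have hdist := hasDistinctVal_of_hasVal_digitBreak_emod hp hb1p hdvd hρf_val
  have hcard : Fintype.card (Fin (p ^ 2)) = Module.finrank K0 K2 := by simp [hdeg]
  have hρf_li := hdist.linearIndependent hv2 hram
  have hΨρ_li : LinearIndependent K0 fun a : Fin (p ^ 2) => Ψf a ρ :=
    linearIndependent_of_zpow_mul hπ0.1 (fun a : Fin (p ^ 2) => d a)
      (by simpa only [hρf] using hρf_li)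
  refine ⟨hρf_li, hdist.mem_integers_iff hv2 hv0 hram hcard fun a => ?_,
    normalBasis_and_basis_galoisAlgebra hcard (fun a => ?_) hΨρ_li⟩
  · rw [(hρf_val a).2]
    exact ⟨Int.emod_nonneg _ hpsq.ne', Int.emod_lt_of_pos _ hpsq⟩
  · rw [hΨf a a.2]
    exact digitOp_scaffoldOp_mem_galoisAlgebra p σ μ a

/-- `{ρ_a : 0 ≤ a < p²}` is an `𝔒₀`-basis of `𝔒₂`
(membership in the valuation rings being `z = 0 ∨ 0 ≤ v(z)`), `ρ` generates a
normal basis of `K₂/K₀`, and `{Ψ^{(a)} : 0 ≤ a < p²}` is a `K₀`-basis of the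
group algebra `K₀[G]`, realized as the `K₀`-span of `G` inside
`End_{K₀}(K₂)`. -/
theorem statement13
    (p : ℕ) (hp : p.Prime)
    (K0 K2 : Type*) [Field K0] [Field K2] [CharZero K0] [CharZero K2]
    [Algebra K0 K2] [IsGalois K0 K2] [FiniteDimensional K0 K2]
    (hdeg : Module.finrank K0 K2 = p ^ 2)
    (hcyc : IsCyclic (K2 ≃ₐ[K0] K2))
    (v0 : K0 → ℤ) (v2 : K2 → ℤ)
    (hv0 : IsDiscVal v0) (hv2 : IsDiscVal v2)
    (e0 : ℤ) (he0 : e0 = v0 (p : K0)) (he0pos : 1 ≤ e0)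
    (hram : ∀ x : K0, x ≠ 0 → v2 (algebraMap K0 K2 x) = (p : ℤ) ^ 2 * v0 x)
    (a1 μ a2 : K0) (ha1 : a1 ≠ 0) (hμ0 : μ ≠ 0)
    (hwitt : ∀ y : K0, y ^ p - y ≠ a1)
    (hnd : ¬ ((p : ℤ) ∣ v0 a1))
    (hneg : v0 a1 < 0)
    (hbd : -((p : ℤ) * e0) < ((p : ℤ) ^ 2 - 1) * v0 a1)
    (m : ℤ) (hm : m = -v0 μ) (hmpos : 0 < m)
    (hmu1 : (p : ℤ) ^ 2 * (p - 1) * m - (2 * p * (p - 1) + 1) * v0 a1 < (p : ℤ) ^ 2 * e0)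
    (hmu2 : -(((p : ℤ) ^ 2 - 1) * v0 a1) < (p : ℤ) ^ 2 * m)
    (ha2 : a2 = μ ^ p * a1)
    (x1 x2 : K2)
    (hx1 : x1 ^ p - x1 = algebraMap K0 K2 a1)
    (hx2 : x2 ^ p - x2 = algebraMap K0 K2 a2 +
      (x1 ^ p + (algebraMap K0 K2 a1) ^ p - (x1 + algebraMap K0 K2 a1) ^ p) / (p : K2))
    (hgen : Algebra.adjoin K0 {x1, x2} = ⊤)
    (b1 b2 : ℤ) (hb1 : b1 = -v0 a1) (hb2 : b2 = (p : ℤ) ^ 2 * m + b1)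
    (σ1 : K2 ≃ₐ[K0] K2) (ε δ' : K2)
    (hσ1x1 : σ1 x1 = x1 + 1 + ε)
    (hε : ε ≠ 0) (hεv : v2 ε = (p : ℤ) ^ 2 * e0 - p * (p - 1) * b1)
    (hσ1x2 : σ1 x2 = x2 + (x1 ^ p + 1 - (x1 + 1) ^ p) / (p : K2) + δ')
    (hδ' : δ' = 0 ∨ 0 < v2 δ')
    (Ψ1 Ψ2 : Module.End K0 K2)
    (hΨ2 : Ψ2 = ((σ1 ^ p).toLinearMap : Module.End K0 K2) - 1)
    (hΨ1 : Ψ1 = (σ1.toLinearMap : Module.End K0 K2) *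
      (∑ i ∈ Finset.range p,
        ((∏ k ∈ Finset.range i, (μ - (k : K0))) / (Nat.factorial i : K0)) • Ψ2 ^ i) - 1)
    (π0 : K0) (hπ0 : π0 ≠ 0) (hπ0v : v0 π0 = 1)
    (ρ0 : K2) (hρ0 : ρ0 ≠ 0) (hρ0v : v2 ρ0 = b2 % (p : ℤ) ^ 2)
    (d : ℕ → ℤ)
    (hd : ∀ a : ℕ, a < p ^ 2 →
      d a = Int.fdiv ((1 + ((a / p : ℕ) : ℤ)) * b2 + ((a % p : ℕ) : ℤ) * (p : ℤ) * b1)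
        ((p : ℤ) ^ 2))
    (Ψf : ℕ → Module.End K0 K2)
    (hΨf : ∀ a : ℕ, Ψf a = if a < p ^ 2 then Ψ2 ^ (a / p) * Ψ1 ^ (a % p) else 0)
    (ρ : K2) (hρ : ρ = algebraMap K0 K2 (π0 ^ d 0) * ρ0)
    (ρf : ℕ → K2) (hρf : ∀ a : ℕ, ρf a = algebraMap K0 K2 (π0 ^ (-d a)) * Ψf a ρ) :
    LinearIndependent K0 (fun a : Fin (p ^ 2) => ρf a) ∧
    (∀ z : K2, (z = 0 ∨ 0 ≤ v2 z) ↔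
      ∃ c : Fin (p ^ 2) → K0, (∀ i, c i = 0 ∨ 0 ≤ v0 (c i)) ∧
        z = ∑ i, algebraMap K0 K2 (c i) * ρf i) ∧
    LinearIndependent K0 (fun σ : K2 ≃ₐ[K0] K2 => σ ρ) ∧
    Submodule.span K0 (Set.range (fun σ : K2 ≃ₐ[K0] K2 => σ ρ)) = ⊤ ∧
    LinearIndependent K0 (fun a : Fin (p ^ 2) => Ψf a) ∧
    Submodule.span K0 (Set.range (fun a : Fin (p ^ 2) => Ψf a)) =
      Submodule.span K0
        {f : Module.End K0 K2 | ∃ σ : K2 ≃ₐ[K0] K2, f = (σ.toLinearMap : Module.End K0 K2)} :=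
  statement13_general hp hdeg hv0 hv2 hram he0 ha1 hμ0 hnd hneg hbd hm hmu2 ha2 hx1 hx2 hb1 hb2
    hσ1x1 (.inr hεv.ge) (by rw [hσ1x2, wittD, one_pow]) hδ' ⟨hπ0, hπ0v⟩ ⟨hρ0, hρ0v⟩ hd
    (fun a ha => by subst hΨ1 hΨ2; exact (hΨf a).trans (if_pos ha)) hρ hρf
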